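/- arXiv:1707.02081 — 4 statements merged into one kernel-verified Lean document; each statement's English description precedes it below -/
import Mathlib

section
/- Let C be a small addable class of finite simple graphs such that for every n ≥ 1 the set of connected graphs in C on the vertex set Fin n is nonempty, and let (H, r) be a rooted graph with H ∈ C and H connected. Then the probability that (H, r) appears in a graph drawn uniformly at random from the connected graphs in C on vertex set Fin n tends to 1 as n → ∞. -/
open Filter Topology FirstOrder

/-- A class of finite simple graphs, given as a property of simple graphs
on arbitrary finite vertex types. -/
abbrev GraphClassOn := ∀ (V : Type) [Finite V], SimpleGraph V → Prop

/-- The class is invariant under graph isomorphism. -/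
def ClassIsoInvariant (C : GraphClassOn) : Prop :=
  ∀ (V W : Type) [Finite V] [Finite W] (G : SimpleGraph V) (H : SimpleGraph W),
    Nonempty (G ≃g H) → (C V G ↔ C W H)

/-- The class is bridge-addable: one may add an edge between two vertices lying in
distinct connected components. -/
def ClassBridgeAddable (C : GraphClassOn) : Prop :=
  ∀ (V : Type) [Finite V] (G : SimpleGraph V) (u v : V),
    C V G → ¬G.Reachable u v → C V (G ⊔ SimpleGraph.fromEdgeSet {s(u, v)})

/-- The class is decomposable: a graph belongs to the class iff each of its connected
components does. -/
def ClassDecomposable (C : GraphClassOn) : Prop :=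
  ∀ (V : Type) [Finite V] (G : SimpleGraph V),
    C V G ↔ ∀ c : G.ConnectedComponent, C c.supp (G.induce c.supp)

/-- Addable = decomposable and bridge-addable. -/
def ClassAddable (C : GraphClassOn) : Prop :=
  ClassDecomposable C ∧ ClassBridgeAddable C

/-- The number of graphs in the class on the vertex set `Fin n`. -/
noncomputable def classCount (C : GraphClassOn) (n : ℕ) : ℕ :=
  Nat.card {G : SimpleGraph (Fin n) // C (Fin n) G}

/-- The class is small: `c_n ≤ d^n · n!` for some real `d`. -/
def ClassSmall (C : GraphClassOn) : Prop :=
  ∃ d : ℝ, ∀ n : ℕ, (classCount C n : ℝ) ≤ d ^ n * n.factorial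

/-- The class is smooth: `c_n / (n · c_{n-1})` tends to a finite limit. -/
def ClassSmooth (C : GraphClassOn) : Prop :=
  ∃ γ : ℝ, Tendsto (fun n : ℕ => (classCount C n : ℝ) / (n * classCount C (n - 1)))
    atTop (𝓝 γ)

/-- The probability that a uniformly random graph from the class on `Fin n`
satisfies the property `P`. -/
noncomputable def classProb (C : GraphClassOn) (n : ℕ) (P : SimpleGraph (Fin n) → Prop) : ℝ :=
  (Nat.card {G : SimpleGraph (Fin n) // C (Fin n) G ∧ P G} : ℝ) / (classCount C n : ℝ)

/-- The probability that a uniformly random *connected* graph from the class on `Fin n`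
satisfies the property `P`. -/
noncomputable def connClassProb (C : GraphClassOn) (n : ℕ)
    (P : SimpleGraph (Fin n) → Prop) : ℝ :=
  (Nat.card {G : SimpleGraph (Fin n) // (C (Fin n) G ∧ G.Connected) ∧ P G} : ℝ) /
    (Nat.card {G : SimpleGraph (Fin n) // C (Fin n) G ∧ G.Connected} : ℝ)

/-- Satisfaction of a first-order sentence in the language of graphs in a simple graph. -/
def SatFO {V : Type} (G : SimpleGraph V) (φ : Language.graph.Sentence) : Prop :=
  letI := G.structure
  V ⊨ φ

/-- The rooted graph `(H, r)` appears in `G` on the vertex set `W`: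
the induced subgraph of `G` on `W` is isomorphic to `H` via an isomorphism sending some
`w ∈ W` to `r`, every edge of `G` joining `W` to its complement is incident on `w`,
and there is exactly one such edge. -/
def AppearsAt {VH V : Type} (H : SimpleGraph VH) (r : VH) (G : SimpleGraph V)
    (W : Set V) : Prop :=
  ∃ (w : V) (hw : w ∈ W) (e : G.induce W ≃g H),
    e ⟨w, hw⟩ = r ∧
    (∀ a ∈ W, ∀ b ∉ W, G.Adj a b → a = w) ∧
    (∃! b, b ∉ W ∧ G.Adj w b)

/-- The rooted graph `(H, r)` appears in `G`. -/
def Appears {VH V : Type} (H : SimpleGraph VH) (r : VH) (G : SimpleGraph V) : Prop :=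
  ∃ W : Set V, AppearsAt H r G W

/-- The number of appearances of the rooted graph `(H, r)` in `G`, i.e. the number of
vertex sets `W` witnessing an appearance. -/
noncomputable def numAppearances {VH V : Type} (H : SimpleGraph VH) (r : VH)
    (G : SimpleGraph V) : ℕ :=
  Nat.card {W : Set V // AppearsAt H r G W}

/-- The number of connected components of `G` whose induced subgraph is isomorphic
to `H`. -/
noncomputable def numComponentsIso {V VH : Type} (G : SimpleGraph V)
    (H : SimpleGraph VH) : ℕ :=
  Nat.card {c : G.ConnectedComponent // Nonempty (G.induce c.supp ≃g H)}

/-! Let `a n` and `b j n` count the connected graphs of the class on `n` vertices, respectively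
those with at most `j` appearances of `(H, r)`, and let `h` be the order of `H`. A connected graph
on `n` vertices has fewer than `n` bridges, so joining two connected graphs by a bridge in all
possible ways shows that `n * a n / (2 * n!)` is supermultiplicative. By Fekete's lemma it is at
most `γ ^ n`, and at least `c ^ n` eventually for each `c < γ`.

Attaching a pendant copy of `H` to any of the `n` vertices of a graph counted by `b j n` creates at
most one new appearance, and a graph with at most `j + 1` appearances arises in at most `j + 1`
ways, so `n * (b j n / n!) ≤ h! * (j + 1) * (b (j + 1) (h + n) / (h + n)!)`. After `m` such steps
`b 0 n / n!` is at most a constant times `(h! * γ ^ h * m / n) ^ m * γ ^ n`. Taking `m = n / q`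
with `q` a large constant, the base is at most `1 / 2`, and so `b 0 n` is exponentially smaller
than `a n`. -/

section Growth

variable {f : ℕ → ℝ}

lemma subadditive_neg_log (hpos : ∀ n, 0 < n → 0 < f n)
    (hmul : ∀ m n, f m * f n ≤ f (m + n)) : Subadditive fun n => -Real.log (f n) := by
  have hlog_zero : Real.log (f 0) ≤ 0 := by
    have h : f 0 * f 0 ≤ f 0 := hmul 0 0
    exact Real.log_nonpos (by nlinarith) (by nlinarith)
  intro m n
  rcases m.eq_zero_or_pos with rfl | hm
  · simpa using hlog_zero
  rcases n.eq_zero_or_pos with rfl | hn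
  · simpa using hlog_zero
  have h := Real.log_le_log (mul_pos (hpos m hm) (hpos n hn)) (hmul m n)
  rw [Real.log_mul (hpos m hm).ne' (hpos n hn).ne'] at h
  linarith

lemma exists_growthRate_of_mul_le (hpos : ∀ n, 0 < n → 0 < f n)
    (hmul : ∀ m n, f m * f n ≤ f (m + n)) {D : ℝ} (hD : ∀ n, f n ≤ D ^ n) :
    ∃ γ > 0, (∀ n, 0 < n → f n ≤ γ ^ n) ∧
      ∀ c, 0 < c → c < γ → ∀ᶠ n in atTop, c ^ n ≤ f n := by
  have hsub := subadditive_neg_log hpos hmul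
  have hbdd : BddBelow (Set.range fun n : ℕ => -Real.log (f n) / n) := by
    refine ⟨-|Real.log D|, Set.forall_mem_range.2 fun n => ?_⟩
    rcases n.eq_zero_or_pos with rfl | hn
    · simp
    have hlog : Real.log (f n) ≤ n * Real.log D :=
      Real.log_pow D n ▸ Real.log_le_log (hpos n hn) (hD n)
    rw [le_div_iff₀ (by positivity)]
    nlinarith [le_abs_self (Real.log D), (Nat.cast_nonneg n : (0 : ℝ) ≤ n)]
  refine ⟨Real.exp (-hsub.lim), Real.exp_pos _, fun n hn => ?_, fun c hc hcγ => ?_⟩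
  · have hlim := hsub.lim_le_div hbdd hn.ne'
    rw [le_div_iff₀ (by positivity)] at hlim
    rw [← Real.exp_nat_mul, ← Real.log_le_iff_le_exp (hpos n hn)]
    linarith
  · have hlim : hsub.lim < -Real.log c := by
      linarith [(Real.log_lt_iff_lt_exp hc).2 hcγ]
    filter_upwards [(hsub.tendsto_lim hbdd).eventually_lt_const hlim, eventually_gt_atTop 0]
      with n hn hn0
    rw [div_lt_iff₀ (by positivity)] at hn
    rw [← Real.log_le_log_iff (by positivity) (hpos n hn0), Real.log_pow]
    linarith

end Growth

section Decay

lemma exists_half_pow_div_le {q : ℕ} (hq : 0 < q) :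
    ∃ ρ : ℝ, 0 < ρ ∧ ρ < 1 ∧ ∀ n : ℕ, (1 / 2 : ℝ) ^ (n / q) ≤ 2 * ρ ^ n := by
  obtain ⟨ρ, hρ, hρq⟩ : ∃ ρ : ℝ, 0 < ρ ∧ ρ ^ q = 1 / 2 :=
    ⟨(1 / 2) ^ (q : ℝ)⁻¹, by positivity, Real.rpow_inv_natCast_pow (by norm_num) hq.ne'⟩
  have hρ1 : ρ < 1 := (pow_lt_one_iff_of_nonneg hρ.le hq.ne').1 (by rw [hρq]; norm_num)
  refine ⟨ρ, hρ, hρ1, fun n => ?_⟩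
  calc (1 / 2 : ℝ) ^ (n / q) = 2 * ρ ^ (q * (n / q) + q) := by
        rw [pow_add, pow_mul, hρq]; ring
    _ ≤ 2 * ρ ^ n := by
        gcongr 2 * ?_
        exact pow_le_pow_of_le_one hρ.le hρ1.le (Nat.lt_mul_div_succ n hq).le

variable {β : ℕ → ℕ → ℝ} {K : ℝ} {h N : ℕ}

lemma pow_mul_le_of_step (hK : 0 ≤ K) (hβ : ∀ j n, 0 ≤ β j n)
    (hstep : ∀ j n, N < n → n * β j n ≤ K * ((j + 1) * β (j + 1) (h + n)))
    {n : ℕ} (hn : N < n) (m : ℕ) :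
    (n : ℝ) ^ m * β 0 n ≤ K ^ m * m.factorial * β m (h * m + n) := by
  induction m with
  | zero => simp
  | succ m ih =>
    calc (n : ℝ) ^ (m + 1) * β 0 n = n * (n ^ m * β 0 n) := by ring
      _ ≤ (h * m + n : ℕ) * (K ^ m * m.factorial * β m (h * m + n)) := by
          have := hβ 0 n
          gcongr
          omega
      _ = K ^ m * m.factorial * ((h * m + n : ℕ) * β m (h * m + n)) := by ring
      _ ≤ K ^ m * m.factorial * (K * ((m + 1) * β (m + 1) (h + (h * m + n)))) := by
          exact mul_le_mul_of_nonneg_left (hstep m _ (by omega)) (by positivity)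
      _ = K ^ (m + 1) * (m + 1).factorial * β (m + 1) (h * (m + 1) + n) := by
          rw [show h + (h * m + n) = h * (m + 1) + n by ring, Nat.factorial_succ]
          push_cast
          ring

lemma exists_le_mul_pow_of_step (hK : 0 ≤ K) (hβ : ∀ j n, 0 ≤ β j n)
    (hstep : ∀ j n, N < n → n * β j n ≤ K * ((j + 1) * β (j + 1) (h + n)))
    {γ M : ℝ} (hγ : 0 < γ) (hM : 0 ≤ M) (hβγ : ∀ j n, N < n → β j n ≤ M * γ ^ n) :
    ∃ ρ, 0 < ρ ∧ ρ < 1 ∧ ∀ n, N < n → β 0 n ≤ 2 * M * (ρ * γ) ^ n := by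
  obtain ⟨q, hq⟩ := exists_nat_ge (2 * (K * γ ^ h) + 1)
  have hq0 : 0 < q := by
    have : 0 ≤ K * γ ^ h := by positivity
    exact_mod_cast (by linarith : (0 : ℝ) < q)
  obtain ⟨ρ, hρ, hρ1, hhalf⟩ := exists_half_pow_div_le hq0
  refine ⟨ρ, hρ, hρ1, fun n hn => ?_⟩
  set m := n / q
  have hn0 : (0 : ℝ) < n := by exact_mod_cast hn.pos
  have hratio : K * γ ^ h * m ≤ 1 / 2 * n := by
    have hmq : (m : ℝ) * q ≤ n := by exact_mod_cast Nat.div_mul_le_self n q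
    nlinarith [(Nat.cast_nonneg m : (0 : ℝ) ≤ m)]
  have hmul : (n : ℝ) ^ m * β 0 n ≤ n ^ m * (M * γ ^ n * (1 / 2) ^ m) :=
    calc (n : ℝ) ^ m * β 0 n ≤ K ^ m * m.factorial * β m (h * m + n) :=
          pow_mul_le_of_step hK hβ hstep hn m
      _ ≤ K ^ m * m ^ m * (M * γ ^ (h * m + n)) := by
          gcongr
          · exact hβ m _
          · exact_mod_cast m.factorial_le_pow
          · exact hβγ m _ (by omega)
      _ = (K * γ ^ h * m) ^ m * (M * γ ^ n) := by rw [pow_add, pow_mul]; ring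
      _ ≤ (1 / 2 * n) ^ m * (M * γ ^ n) := by gcongr
      _ = n ^ m * (M * γ ^ n * (1 / 2) ^ m) := by ring
  calc β 0 n ≤ M * γ ^ n * (1 / 2) ^ m := le_of_mul_le_mul_left hmul (by positivity)
    _ ≤ M * γ ^ n * (2 * ρ ^ n) := by gcongr; exact hhalf n
    _ = 2 * M * (ρ * γ) ^ n := by ring

lemma tendsto_mul_div_zero_of_step {f : ℕ → ℝ} (hpos : ∀ n, 0 < n → 0 < f n)
    (hmul : ∀ m n, f m * f n ≤ f (m + n)) {D : ℝ} (hD : ∀ n, f n ≤ D ^ n)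
    (hK : 0 ≤ K) (hβ : ∀ j n, 0 ≤ β j n)
    (hstep : ∀ j n, N < n → n * β j n ≤ K * ((j + 1) * β (j + 1) (h + n)))
    {M : ℝ} (hM : 0 ≤ M) (hβf : ∀ j n, N < n → β j n ≤ M * f n) :
    Tendsto (fun n : ℕ => n * β 0 n / f n) atTop (𝓝 0) := by
  obtain ⟨γ, hγ, hfγ, hγf⟩ := exists_growthRate_of_mul_le hpos hmul hD
  obtain ⟨ρ, hρ, hρ1, hβρ⟩ := exists_le_mul_pow_of_step hK hβ hstep hγ hM fun j n hn =>
    (hβf j n hn).trans (by gcongr; exact hfγ n hn.pos)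
  obtain ⟨c, hρc, hcγ⟩ := exists_between (mul_lt_of_lt_one_left hγ hρ1)
  have hc : 0 < c := (mul_pos hρ hγ).trans hρc
  have hlim : Tendsto (fun n : ℕ => 2 * M * (n * (ρ * γ / c) ^ n)) atTop (𝓝 0) := by
    simpa using (tendsto_self_mul_const_pow_of_lt_one (by positivity)
      ((div_lt_one hc).2 hρc)).const_mul (2 * M)
  refine squeeze_zero' ?_ ?_ hlim
  · filter_upwards [eventually_gt_atTop 0] with n hn
    exact div_nonneg (mul_nonneg n.cast_nonneg (hβ 0 n)) (hpos n hn).le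
  · filter_upwards [hγf c hc hcγ, eventually_gt_atTop N] with n hcf hn
    calc n * β 0 n / f n ≤ n * (2 * M * (ρ * γ) ^ n) / c ^ n := by
          gcongr
          exact hβρ n hn
      _ = 2 * M * (n * (ρ * γ / c) ^ n) := by rw [div_pow]; ring

end Decay

section UniqueExit

variable {V V' : Type*} {G : SimpleGraph V} {G' : SimpleGraph V'} {W : Set V} {w b : V}

/-- `s(w, b)` is the only edge of `G` between `W` and its complement, with `w` the end in `W`. -/
structure IsUniqueExit (G : SimpleGraph V) (W : Set V) (w b : V) : Prop where
  mem : w ∈ W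
  notMem : b ∉ W
  adj : G.Adj w b
  eq_of_adj : ∀ x ∈ W, ∀ y ∉ W, G.Adj x y → x = w ∧ y = b

namespace IsUniqueExit

lemma exists_adj_of_hom (h : IsUniqueExit G W w b) (f : G' →g G) (hG' : G'.Preconnected)
    {x y : V'} (hx : f x ∈ W) (hy : f y ∉ W) : ∃ u v, G'.Adj u v ∧ f u = w ∧ f v = b := by
  obtain ⟨p⟩ := hG' x y
  obtain ⟨d, -, hfst, hsnd⟩ := p.exists_boundary_dart (f ⁻¹' W) hx hy
  exact ⟨d.fst, d.snd, d.adj, h.eq_of_adj _ hfst _ hsnd (f.map_adj d.adj)⟩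

lemma subset_of_induce_preconnected (h : IsUniqueExit G W w b) {U : Set V}
    (hU : (G.induce U).Preconnected) (hw : w ∈ U) (hb : b ∉ U) : U ⊆ W := by
  intro z hz
  by_contra hzW
  obtain ⟨-, v, -, -, rfl⟩ := h.exists_adj_of_hom (SimpleGraph.Embedding.induce U).toHom hU
    (x := ⟨w, hw⟩) (y := ⟨z, hz⟩) h.mem hzW
  exact hb v.2

end IsUniqueExit

/-- `U` is one side of a bridge of `G`, and is connected. -/
def IsBridgeSide (G : SimpleGraph V) (U : Set V) : Prop :=
  (G.induce U).Connected ∧ ∃ a b, IsUniqueExit G U a b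

/- Each bridge side yields its exit as a dart of any fixed spanning tree, and distinct sides yield
distinct darts. -/
lemma ncard_isBridgeSide_le [Finite V] (hG : G.Connected) :
    {U | IsBridgeSide G U}.ncard ≤ 2 * Nat.card V := by
  classical
  have := Fintype.ofFinite V
  obtain ⟨T, hTG, hT⟩ := hG.exists_isTree_le
  choose a b hab using fun U : {U | IsBridgeSide G U} => U.2.2
  have hdart (U) : T.Adj (a U) (b U) := by
    obtain ⟨u, v, huv, rfl, rfl⟩ := (hab U).exists_adj_of_hom (.ofLE hTG)
      hT.connected.preconnected (hab U).mem (hab U).notMem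
    exact huv
  have hinj : Function.Injective fun U => (⟨(a U, b U), hdart U⟩ : T.Dart) := by
    intro U U' h
    obtain ⟨ha, hb⟩ : a U = a U' ∧ b U = b U' := by simpa using h
    refine Subtype.ext (Set.Subset.antisymm ?_ ?_)
    · exact (hab U').subset_of_induce_preconnected U.2.1.preconnected (ha ▸ (hab U).mem)
        (hb ▸ (hab U).notMem)
    · exact (hab U).subset_of_induce_preconnected U'.2.1.preconnected (ha ▸ (hab U').mem)
        (hb ▸ (hab U').notMem)
  calc {U | IsBridgeSide G U}.ncard ≤ Nat.card T.Dart := Nat.card_le_card_of_injective _ hinj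
    _ = 2 * T.edgeFinset.card := by rw [Nat.card_eq_fintype_card, T.dart_card_eq_twice_card_edges]
    _ ≤ 2 * Nat.card V := by
        rw [Nat.card_eq_fintype_card, ← hT.card_edgeFinset]
        omega

end UniqueExit

section Appearances

variable {VH V V' : Type} {H : SimpleGraph VH} {r : VH} {G : SimpleGraph V} {G' : SimpleGraph V'}
  {W : Set V}

namespace AppearsAt

lemma exists_isUniqueExit (h : AppearsAt H r G W) : ∃ w b, IsUniqueExit G W w b := by
  obtain ⟨w, hw, -, -, hroot, b, ⟨hb, hwb⟩, hunique⟩ := h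
  refine ⟨w, b, hw, hb, hwb, fun x hx y hy hxy => ?_⟩
  obtain rfl := hroot x hx y hy hxy
  exact ⟨rfl, hunique y ⟨hy, hxy⟩⟩

lemma ncard_eq (h : AppearsAt H r G W) : W.ncard = Nat.card VH := by
  obtain ⟨-, -, e, -⟩ := h
  exact Nat.card_congr e.toEquiv

lemma isBridgeSide (h : AppearsAt H r G W) (hH : H.Connected) : IsBridgeSide G W := by
  refine ⟨?_, h.exists_isUniqueExit⟩
  obtain ⟨-, -, e, -⟩ := h
  exact e.connected_iff.2 hH

lemma of_image (f : G ↪g G') (h : AppearsAt H r G' (f '' W))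
    (hexit : ∀ a ∈ W, ∀ b, G'.Adj (f a) b → b ∈ Set.range f) : AppearsAt H r G W := by
  obtain ⟨_, ⟨w, hw, rfl⟩, e, hew, hroot, b, ⟨hb, hwb⟩, hunique⟩ := h
  obtain ⟨b, rfl⟩ := hexit w hw b hwb
  let imageIso : G.induce W ≃g G'.induce (f '' W) :=
    { toEquiv := Equiv.Set.image f W f.injective
      map_rel_iff' := f.map_adj_iff }
  refine ⟨w, hw, imageIso.trans e, hew, fun x hx y hy hxy => ?_, b, ⟨?_, ?_⟩, ?_⟩
  · exact f.injective (hroot _ ⟨x, hx, rfl⟩ _ (f.injective.mem_set_image.not.2 hy)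
      (f.map_adj_iff.2 hxy))
  · exact f.injective.mem_set_image.not.1 hb
  · exact f.map_adj_iff.1 hwb
  · rintro y ⟨hy, hwy⟩
    exact f.injective (hunique _ ⟨f.injective.mem_set_image.not.2 hy, f.map_adj_iff.2 hwy⟩)

end AppearsAt

lemma appearsAt_image_iff (f : G ≃g G') : AppearsAt H r G' (f '' W) ↔ AppearsAt H r G W := by
  refine ⟨fun h => h.of_image f.toEmbedding fun _ _ b _ => f.surjective b, fun h => ?_⟩
  refine AppearsAt.of_image f.symm.toEmbedding ?_ fun _ _ b _ => f.symm.surjective b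
  simpa [Set.image_image] using h

lemma numAppearances_congr (f : G ≃g G') : numAppearances H r G = numAppearances H r G' :=
  Nat.card_congr ((Equiv.Set.congr f.toEquiv).subtypeEquiv fun _ => (appearsAt_image_iff f).symm)

lemma numAppearances_eq_zero_iff [Finite V] : numAppearances H r G = 0 ↔ ¬Appears H r G := by
  rw [numAppearances, Finite.card_eq_zero_iff, isEmpty_subtype, Appears, not_exists]

end Appearances

section BridgeSum

variable {α β : Type} {G₁ : SimpleGraph α} {i : α} {G₂ : SimpleGraph β} {j : β}

/-- The disjoint union of `G₁` and `G₂` together with one new edge, joining `i` and `j`. -/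
def bridgeSum (G₁ : SimpleGraph α) (i : α) (G₂ : SimpleGraph β) (j : β) : SimpleGraph (α ⊕ β) :=
  (G₁ ⊕g G₂) ⊔ SimpleGraph.edge (Sum.inl i) (Sum.inr j)

@[simp] lemma bridgeSum_adj_inl_inl {a a' : α} :
    (bridgeSum G₁ i G₂ j).Adj (.inl a) (.inl a') ↔ G₁.Adj a a' := by
  simp [bridgeSum, SimpleGraph.edge_adj]

@[simp] lemma bridgeSum_adj_inr_inr {b b' : β} :
    (bridgeSum G₁ i G₂ j).Adj (.inr b) (.inr b') ↔ G₂.Adj b b' := by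
  simp [bridgeSum, SimpleGraph.edge_adj]

@[simp] lemma bridgeSum_adj_inl_inr {a : α} {b : β} :
    (bridgeSum G₁ i G₂ j).Adj (.inl a) (.inr b) ↔ a = i ∧ b = j := by
  simp [bridgeSum, SimpleGraph.edge_adj, eq_comm]

/-- The inclusion of the left summand into a bridge sum. -/
def bridgeSumInl (G₁ : SimpleGraph α) (i : α) (G₂ : SimpleGraph β) (j : β) :
    G₁ ↪g bridgeSum G₁ i G₂ j :=
  ⟨.inl, bridgeSum_adj_inl_inl⟩

/-- The inclusion of the right summand into a bridge sum. -/
def bridgeSumInr (G₁ : SimpleGraph α) (i : α) (G₂ : SimpleGraph β) (j : β) :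
    G₂ ↪g bridgeSum G₁ i G₂ j :=
  ⟨.inr, bridgeSum_adj_inr_inr⟩

lemma bridgeSum_inj {G₁' : SimpleGraph α} {i' : α} {G₂' : SimpleGraph β} {j' : β} :
    bridgeSum G₁ i G₂ j = bridgeSum G₁' i' G₂' j' ↔
      (G₁ = G₁' ∧ i = i') ∧ G₂ = G₂' ∧ j = j' := by
  refine ⟨fun h => ?_, by rintro ⟨⟨rfl, rfl⟩, rfl, rfl⟩; rfl⟩
  have hbridge : (bridgeSum G₁' i' G₂' j').Adj (.inl i) (.inr j) := by simp [← h]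
  obtain ⟨hi, hj⟩ := bridgeSum_adj_inl_inr.1 hbridge
  refine ⟨⟨?_, hi⟩, ?_, hj⟩
  · ext a a'
    rw [← bridgeSum_adj_inl_inl, h, bridgeSum_adj_inl_inl]
  · ext b b'
    rw [← bridgeSum_adj_inr_inr, h, bridgeSum_adj_inr_inr]

lemma appearsAt_range_inl : AppearsAt G₁ i (bridgeSum G₁ i G₂ j) (Set.range Sum.inl) := by
  let inlIso := (bridgeSumInl G₁ i G₂ j).isoInduceRange
  refine ⟨.inl i, ⟨i, rfl⟩, inlIso.symm, inlIso.symm_apply_apply i, ?_, .inr j, by simp, ?_⟩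
  · rintro _ ⟨a, rfl⟩ (b | b) hb hab
    · exact absurd ⟨b, rfl⟩ hb
    · rw [(bridgeSum_adj_inl_inr.1 hab).1]
  · rintro (b | b) ⟨hb, hab⟩
    · exact absurd ⟨b, rfl⟩ hb
    · rw [(bridgeSum_adj_inl_inr.1 hab).2]

lemma appearsAt_comap_bridgeSum {V : Type} (e : V ≃ α ⊕ β) :
    AppearsAt G₁ i ((bridgeSum G₁ i G₂ j).comap e) (e ⁻¹' Set.range Sum.inl) := by
  rw [← appearsAt_image_iff (.comap e (bridgeSum G₁ i G₂ j))]
  exact (Set.image_preimage_eq _ e.surjective).symm ▸ appearsAt_range_inl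

variable [Finite α] [Finite β]

lemma IsUniqueExit.eq_range_inl_or_subset_range_inr {W : Set (α ⊕ β)} {w b : α ⊕ β}
    (h : IsUniqueExit (bridgeSum G₁ i G₂ j) W w b) (h₁ : G₁.Preconnected) (h₂ : G₂.Preconnected)
    (hW : W.ncard = Nat.card α) (hcard : Nat.card α < Nat.card β) :
    W = Set.range Sum.inl ∨ W ⊆ Set.range Sum.inr ∧ b ∈ Set.range Sum.inr := by
  have hinl : (Set.range (Sum.inl : α → α ⊕ β)).ncard = Nat.card α :=
    Set.ncard_range_of_injective Sum.inl_injective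
  obtain ⟨y', hy'⟩ : ∃ y' : β, Sum.inr y' ∉ W := by
    by_contra! hall
    have hle := Set.ncard_le_ncard (Set.range_subset_iff.2 hall)
    rw [Set.ncard_range_of_injective Sum.inr_injective] at hle
    omega
  by_cases hmeet : ∃ y : β, Sum.inr y ∈ W
  · right
    obtain ⟨y, hy⟩ := hmeet
    obtain ⟨u, v, -, rfl, rfl⟩ := h.exists_adj_of_hom (bridgeSumInr G₁ i G₂ j).toHom h₂ hy hy'
    refine ⟨?_, v, rfl⟩
    rintro (x | x) hx
    · have hsub : Set.range Sum.inl ⊆ W := by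
        refine Set.range_subset_iff.2 fun x' => by_contra fun hx' => ?_
        obtain ⟨u', -, -, hu', -⟩ :=
          h.exists_adj_of_hom (bridgeSumInl G₁ i G₂ j).toHom h₁ hx hx'
        exact Sum.inl_ne_inr hu'
      have heq := Set.eq_of_subset_of_ncard_le hsub (hW.trans hinl.symm).le
      exact absurd (heq ▸ hy) (by simp)
    · exact ⟨x, rfl⟩
  · left
    push Not at hmeet
    refine Set.eq_of_subset_of_ncard_le ?_ (hinl.trans hW.symm).le
    rintro (x | x) hx
    · exact ⟨x, rfl⟩
    · exact absurd hx (hmeet x)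

lemma AppearsAt.eq_range_inl_or_exists_image_inr {W : Set (α ⊕ β)}
    (h : AppearsAt G₁ i (bridgeSum G₁ i G₂ j) W) (h₁ : G₁.Preconnected) (h₂ : G₂.Preconnected)
    (hcard : Nat.card α < Nat.card β) :
    W = Set.range Sum.inl ∨ ∃ W', AppearsAt G₁ i G₂ W' ∧ Sum.inr '' W' = W := by
  obtain ⟨w, b, hexit⟩ := h.exists_isUniqueExit
  refine (hexit.eq_range_inl_or_subset_range_inr h₁ h₂ h.ncard_eq hcard).imp_right ?_
  rintro ⟨hW, v, rfl⟩
  obtain ⟨W', rfl⟩ := Set.subset_range_iff_exists_image_eq.1 hW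
  refine ⟨W', h.of_image (bridgeSumInr G₁ i G₂ j) fun x hx y hxy => ?_, rfl⟩
  by_cases hy : y ∈ Sum.inr '' W'
  · exact Set.image_subset_range _ _ hy
  · exact ⟨v, (hexit.eq_of_adj _ ⟨x, hx, rfl⟩ y hy hxy).2.symm⟩

lemma numAppearances_bridgeSum_le (h₁ : G₁.Preconnected) (h₂ : G₂.Preconnected)
    (hcard : Nat.card α < Nat.card β) :
    numAppearances G₁ i (bridgeSum G₁ i G₂ j) ≤ numAppearances G₁ i G₂ + 1 := by
  have hsub : {W | AppearsAt G₁ i (bridgeSum G₁ i G₂ j) W} ⊆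
      insert (Set.range Sum.inl) (Set.image Sum.inr '' {W | AppearsAt G₁ i G₂ W}) :=
    fun W hW => AppearsAt.eq_range_inl_or_exists_image_inr hW h₁ h₂ hcard
  calc numAppearances G₁ i (bridgeSum G₁ i G₂ j)
      = {W | AppearsAt G₁ i (bridgeSum G₁ i G₂ j) W}.ncard := Nat.card_coe_set_eq _
    _ ≤ (Set.image Sum.inr '' {W | AppearsAt G₁ i G₂ W}).ncard + 1 :=
        (Set.ncard_le_ncard hsub).trans (Set.ncard_insert_le _ _)
    _ ≤ {W | AppearsAt G₁ i G₂ W}.ncard + 1 := by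
        gcongr
        exact Set.ncard_image_le
    _ = numAppearances G₁ i G₂ + 1 := rfl

end BridgeSum

section DoubleCounting

variable {V α β : Type} [Finite V]

lemma exists_equiv_preimage_range_inl [Finite α] [Finite β] {U : Set V}
    (hU : U.ncard = Nat.card α) (hV : Nat.card V = Nat.card α + Nat.card β) :
    ∃ e : V ≃ α ⊕ β, e ⁻¹' Set.range Sum.inl = U := by
  classical
  have hUc : Uᶜ.ncard = Nat.card β := by
    have := Set.ncard_add_ncard_compl U
    omega
  obtain ⟨e₁⟩ : Nonempty (U ≃ α) := Finite.card_eq.1 hU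
  obtain ⟨e₂⟩ : Nonempty (↥Uᶜ ≃ β) := Finite.card_eq.1 hUc
  refine ⟨(Equiv.Set.sumCompl U).symm.trans (e₁.sumCongr e₂), Set.ext fun v => ?_⟩
  by_cases hv : v ∈ U <;> simp [hv, Equiv.Set.sumCompl_symm_apply_of_mem,
    Equiv.Set.sumCompl_symm_apply_of_notMem]

variable [Finite α] [Finite β]

lemma choose_mul_ncard_le (hV : Nat.card V = Nat.card α + Nat.card β)
    {S : Set (SimpleGraph α × α)} {T : Set (SimpleGraph β × β)} {Y : Set (SimpleGraph V)}
    {cuts : SimpleGraph V → Set (Set V)} {K : ℕ} (hcuts : ∀ G ∈ Y, (cuts G).ncard ≤ K)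
    (hsum : ∀ e : V ≃ α ⊕ β, ∀ p ∈ S, ∀ q ∈ T,
      (bridgeSum p.1 p.2 q.1 q.2).comap e ∈ Y ∧
        e ⁻¹' Set.range Sum.inl ∈ cuts ((bridgeSum p.1 p.2 q.1 q.2).comap e)) :
    (Nat.card V).choose (Nat.card α) * (S.ncard * T.ncard) ≤ K * Y.ncard := by
  have := Fintype.ofFinite Y
  choose e he using fun U : Set.powersetCard V (Nat.card α) =>
    exists_equiv_preimage_range_inl (Set.powersetCard.ncard_eq U) hV
  let assemble : Set.powersetCard V (Nat.card α) × S × T → Σ G : Y, cuts G := fun x =>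
    ⟨⟨_, (hsum (e x.1) _ x.2.1.2 _ x.2.2.2).1⟩, x.1, he x.1 ▸ (hsum (e x.1) _ x.2.1.2 _ x.2.2.2).2⟩
  have hinj : Function.Injective assemble := by
    rintro ⟨U, p, q⟩ ⟨U', p', q'⟩ h
    obtain rfl : U = U' := Subtype.ext (Finset.coe_injective (congrArg (fun z => z.2.1) h))
    have hG := (e U).symm.simpleGraph.injective (congrArg (fun z => z.1.1) h)
    obtain ⟨hp, hq⟩ := bridgeSum_inj.1 hG
    obtain rfl : p = p' := Subtype.ext (Prod.ext hp.1 hp.2)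
    obtain rfl : q = q' := Subtype.ext (Prod.ext hq.1 hq.2)
    rfl
  calc (Nat.card V).choose (Nat.card α) * (S.ncard * T.ncard)
      = Nat.card (Set.powersetCard V (Nat.card α) × S × T) := by
        rw [Nat.card_prod, Nat.card_prod, Set.powersetCard.card, Nat.card_coe_set_eq,
          Nat.card_coe_set_eq]
    _ ≤ Nat.card (Σ G : Y, cuts G) := Nat.card_le_card_of_injective assemble hinj
    _ = ∑ G : Y, (cuts G).ncard := Nat.card_sigma
    _ ≤ ∑ _G : Y, K := Finset.sum_le_sum fun G _ => hcuts G G.2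
    _ = K * Y.ncard := by
        rw [Finset.sum_const, smul_eq_mul, mul_comm, Finset.card_univ, ← Nat.card_eq_fintype_card,
          Nat.card_coe_set_eq]

end DoubleCounting

section ClassMembers

/-- The connected graphs of the class `C` on the vertex set `V`. -/
def connMembers (C : GraphClassOn) (V : Type) [Finite V] : Set (SimpleGraph V) :=
  {G | C V G ∧ G.Connected}

/-- The class contains every graph obtained by joining two of its connected members, on disjoint
vertex sets, by one new edge. -/
def ClassBridgeSumClosed (C : GraphClassOn) : Prop :=
  ∀ (α β : Type) [Finite α] [Finite β] (G₁ : SimpleGraph α) (i : α) (G₂ : SimpleGraph β) (j : β),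
    G₁ ∈ connMembers C α → G₂ ∈ connMembers C β → C (α ⊕ β) (bridgeSum G₁ i G₂ j)

/-- The connected graphs of the class `C` on `V` in which the rooted graph `(H, r)` appears at most
`j` times. -/
def fewAppearances (C : GraphClassOn) {VH : Type} (H : SimpleGraph VH) (r : VH) (j : ℕ) (V : Type)
    [Finite V] : Set (SimpleGraph V) :=
  {G ∈ connMembers C V | numAppearances H r G ≤ j}

lemma supp_connectedComponentMk_eq_range {V V' : Type*} {G : SimpleGraph V} {G' : SimpleGraph V'}
    (f : G' →g G) (hG' : G'.Preconnected) (hclosed : ∀ x y, G.Adj (f x) y → y ∈ Set.range f)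
    (v : V') : (G.connectedComponentMk (f v)).supp = Set.range f := by
  ext y
  rw [SimpleGraph.ConnectedComponent.mem_supp_iff, SimpleGraph.ConnectedComponent.eq]
  refine ⟨fun h => ?_, ?_⟩
  · by_contra hy
    obtain ⟨p⟩ := h.symm
    obtain ⟨d, -, ⟨x, hx⟩, hsnd⟩ := p.exists_boundary_dart (Set.range f) ⟨v, rfl⟩ hy
    exact hsnd (hclosed x d.snd (hx ▸ d.adj))
  · rintro ⟨x, rfl⟩
    exact (hG' x v).map f

variable {C : GraphClassOn}

lemma ClassIsoInvariant.mem_induce_supp (hIso : ClassIsoInvariant C) {V V' : Type} [Finite V]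
    [Finite V'] {G : SimpleGraph V} {G' : SimpleGraph V'} (f : G' ↪g G) (hG' : G'.Preconnected)
    (hclosed : ∀ x y, G.Adj (f x) y → y ∈ Set.range f) (hC : C V' G') (v : V') :
    C (G.connectedComponentMk (f v)).supp (G.induce (G.connectedComponentMk (f v)).supp) := by
  have hsupp : (G.connectedComponentMk (f v)).supp = Set.range f :=
    supp_connectedComponentMk_eq_range f.toHom hG' hclosed v
  refine (hIso _ _ _ _ ?_).1 hC
  rw [hsupp]
  exact ⟨f.isoInduceRange⟩

lemma ClassAddable.bridgeSumClosed (hAdd : ClassAddable C) (hIso : ClassIsoInvariant C) :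
    ClassBridgeSumClosed C := by
  intro α β _ _ G₁ i G₂ j h₁ h₂
  refine hAdd.2 _ _ _ _ ((hAdd.1 _ _).2 fun c => ?_) (SimpleGraph.not_reachable_sum_inl_inr i j)
  induction c using SimpleGraph.ConnectedComponent.ind with | _ v =>
  rcases v with a | b
  · exact hIso.mem_induce_supp .sumInl h₁.2.preconnected (by simp) h₁.1 a
  · exact hIso.mem_induce_supp .sumInr h₂.2.preconnected (by simp) h₂.1 b

variable {V W α β : Type} [Finite V] [Finite W] [Finite α] [Finite β]

lemma comap_mem_connMembers (hIso : ClassIsoInvariant C) (e : V ≃ W) {G : SimpleGraph W} :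
    G.comap e ∈ connMembers C V ↔ G ∈ connMembers C W :=
  and_congr (hIso _ _ _ _ ⟨.comap e G⟩) (SimpleGraph.Iso.comap e G).connected_iff

lemma comap_bridgeSum_mem_connMembers (hIso : ClassIsoInvariant C)
    (hBridge : ClassBridgeSumClosed C) (e : V ≃ α ⊕ β) {G₁ : SimpleGraph α} {i : α}
    {G₂ : SimpleGraph β} {j : β} (h₁ : G₁ ∈ connMembers C α) (h₂ : G₂ ∈ connMembers C β) :
    (bridgeSum G₁ i G₂ j).comap e ∈ connMembers C V :=
  (comap_mem_connMembers hIso e).2 ⟨hBridge _ _ _ i _ j h₁ h₂, h₁.2.sum_sup_edge h₂.2⟩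

lemma choose_mul_ncard_connMembers_le (hIso : ClassIsoInvariant C)
    (hBridge : ClassBridgeSumClosed C) (hV : Nat.card V = Nat.card α + Nat.card β) :
    (Nat.card V).choose (Nat.card α) * (((connMembers C α).ncard * Nat.card α) *
      ((connMembers C β).ncard * Nat.card β)) ≤ 2 * Nat.card V * (connMembers C V).ncard := by
  have h := choose_mul_ncard_le hV (S := connMembers C α ×ˢ .univ) (T := connMembers C β ×ˢ .univ)
    (Y := connMembers C V) (cuts := fun G => {U | IsBridgeSide G U})
    (fun G hG => ncard_isBridgeSide_le hG.2) fun e p hp q hq =>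
      ⟨comap_bridgeSum_mem_connMembers hIso hBridge e hp.1 hq.1,
        (appearsAt_comap_bridgeSum e).isBridgeSide hp.1.2⟩
  simpa only [Set.ncard_prod, Set.ncard_univ] using h

lemma choose_mul_ncard_fewAppearances_le (hIso : ClassIsoInvariant C)
    (hBridge : ClassBridgeSumClosed C) {H : SimpleGraph α} (hH : H ∈ connMembers C α) (r : α)
    (j : ℕ) (hV : Nat.card V = Nat.card α + Nat.card β) (hcard : Nat.card α < Nat.card β) :
    (Nat.card V).choose (Nat.card α) * ((fewAppearances C H r j β).ncard * Nat.card β) ≤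
      (j + 1) * (fewAppearances C H r (j + 1) V).ncard := by
  have h := choose_mul_ncard_le hV (S := {(H, r)}) (T := fewAppearances C H r j β ×ˢ .univ)
    (Y := fewAppearances C H r (j + 1) V) (cuts := fun G => {U | AppearsAt H r G U})
    (fun G hG => hG.2) ?_
  · simpa only [Set.ncard_prod, Set.ncard_univ, Set.ncard_singleton, one_mul] using h
  rintro e _ rfl q ⟨⟨hqC, hqfew⟩, -⟩
  refine ⟨⟨comap_bridgeSum_mem_connMembers hIso hBridge e hH hqC, ?_⟩,
    appearsAt_comap_bridgeSum e⟩
  calc numAppearances H r ((bridgeSum H r q.1 q.2).comap e)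
      = numAppearances H r (bridgeSum H r q.1 q.2) := numAppearances_congr (.comap e _)
    _ ≤ numAppearances H r q.1 + 1 :=
        numAppearances_bridgeSum_le hH.2.preconnected hqC.2.preconnected hcard
    _ ≤ j + 1 := by gcongr

end ClassMembers

section Normalization

variable {C : GraphClassOn}

lemma div_factorial_le_of_choose_mul_le {k l x y : ℕ} (h : (k + l).choose k * x ≤ y) :
    (x : ℝ) / (k.factorial * l.factorial) ≤ y / (k + l).factorial := by
  have hcast : ((k + l).choose k : ℝ) * x ≤ y := by exact_mod_cast h
  rw [Nat.cast_add_choose] at hcast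
  rw [le_div_iff₀ (by positivity)]
  exact (by ring : _ = _).trans_le hcast

lemma fewAppearances_subset {VH V : Type} [Finite V] {H : SimpleGraph VH} {r : VH} {j : ℕ} :
    fewAppearances C H r j V ⊆ connMembers C V :=
  Set.sep_subset _ _

/-- The number of vertex-rooted connected graphs of the class on `n` vertices, divided by `n!`;
the further factor `1/2` makes it supermultiplicative in `n`. -/
noncomputable def connGrowth (C : GraphClassOn) (n : ℕ) : ℝ :=
  n * (connMembers C (Fin n)).ncard / (2 * n.factorial)

/-- The number of connected graphs of the class on `n` vertices with at most `j` appearances of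
`(H, r)`, divided by `n!`. -/
noncomputable def fewAppearancesDensity (C : GraphClassOn) {VH : Type} (H : SimpleGraph VH)
    (r : VH) (j n : ℕ) : ℝ :=
  (fewAppearances C H r j (Fin n)).ncard / n.factorial

lemma connGrowth_pos {n : ℕ} (hn : 0 < n) (hne : (connMembers C (Fin n)).Nonempty) :
    0 < connGrowth C n := by
  have hcard : 0 < (connMembers C (Fin n)).ncard := (Set.ncard_pos).2 hne
  unfold connGrowth
  positivity

lemma connGrowth_mul_le (hIso : ClassIsoInvariant C) (hBridge : ClassBridgeSumClosed C)
    (k l : ℕ) : connGrowth C k * connGrowth C l ≤ connGrowth C (k + l) := by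
  have h := choose_mul_ncard_connMembers_le (V := Fin (k + l)) (α := Fin k) (β := Fin l) hIso
    hBridge (by simp only [Nat.card_fin])
  simp only [Nat.card_fin] at h
  have hdiv := div_factorial_le_of_choose_mul_le h
  push_cast at hdiv
  unfold connGrowth
  push_cast
  calc (k * (connMembers C (Fin k)).ncard / (2 * k.factorial) *
        (l * (connMembers C (Fin l)).ncard / (2 * l.factorial)) : ℝ)
      = (connMembers C (Fin k)).ncard * k * ((connMembers C (Fin l)).ncard * l) /
          (k.factorial * l.factorial) / 4 := by field_simp; ring
    _ ≤ 2 * (k + l) * (connMembers C (Fin (k + l))).ncard / (k + l).factorial / 4 := by gcongr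
    _ = (k + l) * (connMembers C (Fin (k + l))).ncard / (2 * (k + l).factorial) := by
        field_simp; ring

lemma connGrowth_le_pow {d : ℝ}
    (hSmall : ∀ n : ℕ, ((connMembers C (Fin n)).ncard : ℝ) ≤ d ^ n * n.factorial) (n : ℕ) :
    connGrowth C n ≤ (2 * d) ^ n := by
  have hd : 0 ≤ d := (Nat.cast_nonneg _).trans (by simpa using hSmall 1)
  have hn : (n : ℝ) ≤ 2 ^ n := by exact_mod_cast Nat.lt_two_pow_self.le
  calc connGrowth C n ≤ 2 ^ n * (d ^ n * n.factorial) / (1 * n.factorial) := by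
        unfold connGrowth
        gcongr
        · exact hSmall n
        · norm_num
    _ = (2 * d) ^ n := by
        rw [mul_pow]
        field_simp

variable {VH : Type} {H : SimpleGraph VH} {r : VH}

lemma fewAppearancesDensity_le (j : ℕ) {n : ℕ} (hn : 0 < n) :
    fewAppearancesDensity C H r j n ≤ 2 * connGrowth C n := by
  have hle : (fewAppearances C H r j (Fin n)).ncard ≤ (connMembers C (Fin n)).ncard :=
    Set.ncard_le_ncard fewAppearances_subset
  have hmul : (connMembers C (Fin n)).ncard ≤ n * (connMembers C (Fin n)).ncard :=
    Nat.le_mul_of_pos_left _ hn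
  calc fewAppearancesDensity C H r j n
      ≤ (n * (connMembers C (Fin n)).ncard : ℕ) / n.factorial := by
        unfold fewAppearancesDensity
        gcongr
        exact hle.trans hmul
    _ = 2 * connGrowth C n := by
        unfold connGrowth
        push_cast
        field_simp

lemma mul_fewAppearancesDensity_le [Finite VH] (hIso : ClassIsoInvariant C)
    (hBridge : ClassBridgeSumClosed C) (hH : H ∈ connMembers C VH) (j : ℕ) {n : ℕ}
    (hn : Nat.card VH < n) :
    n * fewAppearancesDensity C H r j n ≤ (Nat.card VH).factorial *
      ((j + 1) * fewAppearancesDensity C H r (j + 1) (Nat.card VH + n)) := by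
  have h := choose_mul_ncard_fewAppearances_le (V := Fin (Nat.card VH + n)) (β := Fin n) hIso
    hBridge hH r j (by simp only [Nat.card_fin]) (by rwa [Nat.card_fin])
  simp only [Nat.card_fin] at h
  have hdiv := div_factorial_le_of_choose_mul_le h
  push_cast at hdiv
  unfold fewAppearancesDensity
  calc (n * ((fewAppearances C H r j (Fin n)).ncard / n.factorial) : ℝ)
      = (Nat.card VH).factorial * ((fewAppearances C H r j (Fin n)).ncard * n /
          ((Nat.card VH).factorial * n.factorial)) := by field_simp
    _ ≤ (Nat.card VH).factorial * ((j + 1) *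
          (fewAppearances C H r (j + 1) (Fin (Nat.card VH + n))).ncard /
            (Nat.card VH + n).factorial) := by gcongr
    _ = (Nat.card VH).factorial * ((j + 1) *
          ((fewAppearances C H r (j + 1) (Fin (Nat.card VH + n))).ncard /
            (Nat.card VH + n).factorial)) := by rw [mul_div_assoc]

lemma mul_fewAppearancesDensity_div_connGrowth (j : ℕ) {n : ℕ} (hn : 0 < n) :
    n * fewAppearancesDensity C H r j n / connGrowth C n =
      2 * ((fewAppearances C H r j (Fin n)).ncard / (connMembers C (Fin n)).ncard) := by
  unfold fewAppearancesDensity connGrowth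
  field_simp

lemma connClassProb_appears {n : ℕ} (hne : (connMembers C (Fin n)).Nonempty) :
    connClassProb C n (fun G => Appears H r G) =
      1 - (fewAppearances C H r 0 (Fin n)).ncard / (connMembers C (Fin n)).ncard := by
  have hdiff : {G | (C (Fin n) G ∧ G.Connected) ∧ Appears H r G} =
      connMembers C (Fin n) \ fewAppearances C H r 0 (Fin n) := by
    ext G
    have := numAppearances_eq_zero_iff (H := H) (r := r) (G := G)
    simp only [connMembers, fewAppearances, Nat.le_zero, Set.mem_sdiff, Set.mem_ofPred_eq]
    tauto
  have hcard : ({G | (C (Fin n) G ∧ G.Connected) ∧ Appears H r G}.ncard : ℝ) =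
      (connMembers C (Fin n)).ncard - (fewAppearances C H r 0 (Fin n)).ncard := by
    rw [hdiff, Set.cast_ncard_sdiff fewAppearances_subset (Set.toFinite _)]
  have hpos : (0 : ℝ) < (connMembers C (Fin n)).ncard := by exact_mod_cast (Set.ncard_pos).2 hne
  calc connClassProb C n (fun G => Appears H r G)
      = ((connMembers C (Fin n)).ncard - (fewAppearances C H r 0 (Fin n)).ncard) /
          (connMembers C (Fin n)).ncard := congrArg (· / _) hcard
    _ = 1 - (fewAppearances C H r 0 (Fin n)).ncard / (connMembers C (Fin n)).ncard := by
        rw [sub_div, div_self hpos.ne']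

end Normalization

theorem rooted_graph_appears_in_connected_general (C : GraphClassOn) (hIso : ClassIsoInvariant C)
    (hBridge : ClassBridgeSumClosed C) (d : ℝ)
    (hSmall : ∀ n : ℕ, ((connMembers C (Fin n)).ncard : ℝ) ≤ d ^ n * n.factorial)
    (hne : ∀ n : ℕ, 1 ≤ n → (connMembers C (Fin n)).Nonempty)
    (VH : Type) [Finite VH] (H : SimpleGraph VH) (r : VH) (hH : H ∈ connMembers C VH) :
    Tendsto (fun n : ℕ => connClassProb C n (fun G => Appears H r G)) atTop (𝓝 1) := by
  have hratio : Tendsto (fun n : ℕ => n * fewAppearancesDensity C H r 0 n / connGrowth C n)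
      atTop (𝓝 0) :=
    tendsto_mul_div_zero_of_step (fun n hn => connGrowth_pos hn (hne n hn))
      (connGrowth_mul_le hIso hBridge) (connGrowth_le_pow hSmall) (Nat.cast_nonneg _)
      (fun j n => by unfold fewAppearancesDensity; positivity)
      (fun j n hn => mul_fewAppearancesDensity_le hIso hBridge hH j hn) zero_le_two
      (fun j n hn => fewAppearancesDensity_le j hn.pos)
  have hlim := (hratio.div_const 2).const_sub 1
  rw [zero_div, sub_zero] at hlim
  refine hlim.congr' ?_
  filter_upwards [eventually_gt_atTop 0] with n hn
  rw [connClassProb_appears (hne n hn), mul_fewAppearancesDensity_div_connGrowth 0 hn,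
    mul_div_cancel_left₀ _ two_ne_zero]

/-- Every connected rooted graph from a small addable class appears in
the random *connected* graph from the class with probability tending to `1`. -/
theorem rooted_graph_appears_in_connected
    (C : GraphClassOn) (hIso : ClassIsoInvariant C) (hAdd : ClassAddable C)
    (hSmall : ClassSmall C)
    (hne : ∀ n : ℕ, 1 ≤ n → ∃ G : SimpleGraph (Fin n), C (Fin n) G ∧ G.Connected)
    (VH : Type) [Finite VH] (H : SimpleGraph VH) (r : VH)
    (hH : C VH H) (hHconn : H.Connected) :
    Tendsto (fun n : ℕ => connClassProb C n (fun G => Appears H r G)) atTop (𝓝 1) := by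
  obtain ⟨d, hd⟩ := hSmall
  exact rooted_graph_appears_in_connected_general C hIso (hAdd.bridgeSumClosed hIso) d
    (fun n => (Nat.cast_le.2 (Set.ncard_le_ncard fun _ hG => hG.1)).trans (hd n)) hne VH H r
    ⟨hH, hHconn⟩
end

section
/- Let C be a smooth addable class of finite simple graphs with C_n nonempty for every n ≥ 1. For every ε > 0 there exists a constant g such that, for all sufficiently large n, with probability at least 1 − ε the uniformly random graph R_n(C) on vertex set Fin n has a connected component containing at least n − g vertices. -/
open Filter Topology FirstOrder

/-!
Count pairs of a graph of the class and an edge joining two of its components. Adding that edge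
turns the pair into a graph of the class with a marked bridge, injectively, since deleting the
marked bridge recovers the original graph. The bridges of a graph on `n` vertices form a forest, so
on average there are fewer than `n` addable edges. If every component misses more than `g` vertices,
then there are at least `n * (g + 1) / 2` addable edges, so by Markov's inequality this happens with
probability at most `2 / (g + 1)`.
-/

section

variable {V : Type*}

/-- The graph joining any two vertices in distinct components of `G`; its edges are those whose
addition to `G` creates a bridge. -/
def unreachableGraph (G : SimpleGraph V) : SimpleGraph V where
  Adj u v := ¬G.Reachable u v
  symm := ⟨fun _ _ h h' => h h'.symm⟩
  loopless := ⟨fun u h => h (.refl u)⟩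

/-- The spanning subgraph formed by the bridges of `G`. Adjacency in `G` is required because
`SimpleGraph.IsBridge` also holds for pairs of vertices in distinct components. -/
def bridgeGraph (G : SimpleGraph V) : SimpleGraph V where
  Adj u v := G.Adj u v ∧ G.IsBridge s(u, v)
  symm := ⟨fun _ _ h => ⟨h.1.symm, Sym2.eq_swap ▸ h.2⟩⟩
  loopless := ⟨fun _ h => h.1.ne rfl⟩

/-- Bridge-addability of a finite family of graphs on a fixed vertex set. -/
def IsBridgeAddable (𝒢 : Finset (SimpleGraph V)) : Prop :=
  ∀ G ∈ 𝒢, ∀ e ∈ (unreachableGraph G).edgeSet, G ⊔ SimpleGraph.fromEdgeSet {e} ∈ 𝒢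

lemma neighborSet_unreachableGraph (G : SimpleGraph V) (v : V) :
    (unreachableGraph G).neighborSet v = (G.connectedComponentMk v).suppᶜ := by
  ext w
  simp [unreachableGraph, SimpleGraph.reachable_comm]

lemma isAcyclic_bridgeGraph (G : SimpleGraph V) : (bridgeGraph G).IsAcyclic :=
  SimpleGraph.isAcyclic_iff_forall_adj_isBridge.mpr fun _ _ h => h.2.anti fun _ _ h => h.1

lemma deleteEdges_sup_fromEdgeSet_singleton {G : SimpleGraph V} {e : Sym2 V}
    (he : e ∉ G.edgeSet) : (G ⊔ SimpleGraph.fromEdgeSet {e}).deleteEdges {e} = G := by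
  simpa [SimpleGraph.deleteEdges_sup, SimpleGraph.deleteEdges]

lemma notMem_edgeSet_of_mem_edgeSet_unreachableGraph {G : SimpleGraph V} {e : Sym2 V}
    (he : e ∈ (unreachableGraph G).edgeSet) : e ∉ G.edgeSet := by
  induction e with | h u v => exact mt SimpleGraph.Adj.reachable he

lemma mem_edgeSet_bridgeGraph_sup_fromEdgeSet {G : SimpleGraph V} {e : Sym2 V}
    (he : e ∈ (unreachableGraph G).edgeSet) :
    e ∈ (bridgeGraph (G ⊔ SimpleGraph.fromEdgeSet {e})).edgeSet := by
  induction e with | h u v =>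
  refine ⟨?_, SimpleGraph.isBridge_sup_edge.mpr (.of_not_reachable he)⟩
  exact Or.inr <| (SimpleGraph.fromEdgeSet_adj _).mpr ⟨rfl, (unreachableGraph G).ne_of_adj he⟩

variable [Finite V]

lemma lt_ncard_compl_iff {s : Set V} {g : ℕ} :
    g < sᶜ.ncard ↔ Nat.card s < Nat.card V - g := by
  have := Set.ncard_add_ncard_compl s
  rw [Nat.card_coe_set_eq]
  omega

lemma ncard_edgeSet_lt_of_isAcyclic [Nonempty V] {G : SimpleGraph V} (hG : G.IsAcyclic) :
    G.edgeSet.ncard < Nat.card V := by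
  classical
  cases nonempty_fintype V
  obtain ⟨T, hGT, -, hT⟩ :=
    SimpleGraph.connected_top.exists_isTree_le_of_le_of_isAcyclic le_top hG
  calc
    G.edgeSet.ncard ≤ T.edgeSet.ncard := Set.ncard_le_ncard (SimpleGraph.edgeSet_mono hGT)
    _ = T.edgeFinset.card := Set.ncard_eq_toFinset_card' _
    _ < Nat.card V := by rw [Nat.card_eq_fintype_card, ← hT.card_edgeFinset]; exact lt_add_one _

lemma card_mul_le_two_mul_ncard_edgeSet {G : SimpleGraph V} {k : ℕ}
    (hk : ∀ v, k ≤ (G.neighborSet v).ncard) : Nat.card V * k ≤ 2 * G.edgeSet.ncard := by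
  classical
  cases nonempty_fintype V
  have hdeg (v : V) : k ≤ G.degree v := by
    rw [← G.card_neighborSet_eq_degree, ← Nat.card_eq_fintype_card, Nat.card_coe_set_eq]
    exact hk v
  calc
    Nat.card V * k ≤ ∑ v, G.degree v := by
      simpa using Finset.card_nsmul_le_sum Finset.univ (G.degree ·) k fun v _ => hdeg v
    _ = 2 * G.edgeSet.ncard := by
      rw [G.sum_degrees_eq_twice_card_edges, Set.ncard_eq_toFinset_card', SimpleGraph.edgeFinset]

lemma sum_ncard_edgeSet_unreachableGraph_le {𝒢 : Finset (SimpleGraph V)}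
    (h𝒢 : IsBridgeAddable 𝒢) :
    ∑ G ∈ 𝒢, (unreachableGraph G).edgeSet.ncard ≤ ∑ G ∈ 𝒢, (bridgeGraph G).edgeSet.ncard := by
  classical
  cases nonempty_fintype V
  simp only [Set.ncard_eq_toFinset_card', ← Finset.card_sigma]
  refine Finset.card_le_card_of_injOn (fun x => ⟨x.1 ⊔ SimpleGraph.fromEdgeSet {x.2}, x.2⟩) ?_ ?_
  · rintro ⟨G, e⟩ hx
    obtain ⟨hG, he⟩ : G ∈ 𝒢 ∧ e ∈ (unreachableGraph G).edgeSet := by simpa using hx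
    simpa using And.intro (h𝒢 G hG e he) (mem_edgeSet_bridgeGraph_sup_fromEdgeSet he)
  · rintro ⟨G, e⟩ hx ⟨G', e'⟩ hy hxy
    obtain ⟨hsup, rfl⟩ : G ⊔ SimpleGraph.fromEdgeSet {e} = G' ⊔ SimpleGraph.fromEdgeSet {e'} ∧
      e = e' := by simpa using hxy
    have he : e ∈ (unreachableGraph G).edgeSet := by simpa using (Finset.mem_sigma.mp hx).2
    have he' : e ∈ (unreachableGraph G').edgeSet := by simpa using (Finset.mem_sigma.mp hy).2
    have hGG' : G = G' := by
      simpa only [deleteEdges_sup_fromEdgeSet_singleton,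
        notMem_edgeSet_of_mem_edgeSet_unreachableGraph he,
        notMem_edgeSet_of_mem_edgeSet_unreachableGraph he', not_false_eq_true]
        using congrArg (·.deleteEdges {e}) hsup
    rw [hGG']

lemma card_mul_le_of_forall_le_ncard_compl_supp [Nonempty V] {𝒢 ℬ : Finset (SimpleGraph V)}
    (h𝒢 : IsBridgeAddable 𝒢) (hℬ𝒢 : ℬ ⊆ 𝒢) {k : ℕ}
    (hk : ∀ G ∈ ℬ, ∀ c : G.ConnectedComponent, k ≤ c.suppᶜ.ncard) :
    ℬ.card * k ≤ 2 * 𝒢.card := by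
  have hedges (G) (hG : G ∈ ℬ) : Nat.card V * k ≤ 2 * (unreachableGraph G).edgeSet.ncard :=
    card_mul_le_two_mul_ncard_edgeSet fun v => neighborSet_unreachableGraph G v ▸ hk G hG _
  refine Nat.le_of_mul_le_mul_left ?_ (Nat.card_pos (α := V))
  calc
    Nat.card V * (ℬ.card * k) = ∑ _ ∈ ℬ, Nat.card V * k := by
      rw [Finset.sum_const, smul_eq_mul, mul_left_comm]
    _ ≤ ∑ G ∈ ℬ, 2 * (unreachableGraph G).edgeSet.ncard := Finset.sum_le_sum hedges
    _ ≤ ∑ G ∈ 𝒢, 2 * (unreachableGraph G).edgeSet.ncard := Finset.sum_le_sum_of_subset hℬ𝒢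
    _ = 2 * ∑ G ∈ 𝒢, (unreachableGraph G).edgeSet.ncard := (Finset.mul_sum ..).symm
    _ ≤ 2 * ∑ G ∈ 𝒢, (bridgeGraph G).edgeSet.ncard := by
      gcongr 2 * ?_
      exact sum_ncard_edgeSet_unreachableGraph_le h𝒢
    _ ≤ 2 * ∑ _ ∈ 𝒢, Nat.card V := by
      gcongr with G
      exact (ncard_edgeSet_lt_of_isAcyclic (isAcyclic_bridgeGraph G)).le
    _ = Nat.card V * (2 * 𝒢.card) := by
      rw [Finset.sum_const, smul_eq_mul]
      ring

end

section

variable {C : GraphClassOn} {n : ℕ}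

lemma classProb_add_classProb_not (hC : ∃ G, C (Fin n) G) (P : SimpleGraph (Fin n) → Prop) :
    classProb C n P + classProb C n (fun G => ¬P G) = 1 := by
  classical
  have hpos : 0 < classCount C n := by
    obtain ⟨G, hG⟩ := hC
    exact Nat.card_pos_iff.mpr ⟨⟨⟨G, hG⟩⟩, inferInstance⟩
  have hsplit : Nat.card {G // C (Fin n) G ∧ P G} + Nat.card {G // C (Fin n) G ∧ ¬P G} =
      classCount C n := by
    simp only [classCount, Nat.card_eq_fintype_card, Fintype.card_subtype,
      ← Finset.filter_filter, Finset.card_filter_add_card_filter_not]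
  rw [classProb, classProb, ← add_div, div_eq_one_iff_eq (by positivity)]
  exact_mod_cast hsplit

lemma classProb_forall_lt_ncard_compl_supp_le (hC : ClassBridgeAddable C) (hn : 0 < n) (g : ℕ) :
    classProb C n (fun G => ∀ c : G.ConnectedComponent, g < c.suppᶜ.ncard) ≤ 2 / (g + 1) := by
  classical
  have : Nonempty (Fin n) := Fin.pos_iff_nonempty.mp hn
  let 𝒢 : Finset (SimpleGraph (Fin n)) := {G | C (Fin n) G}
  let ℬ : Finset (SimpleGraph (Fin n)) :=
    {G | C (Fin n) G ∧ ∀ c : G.ConnectedComponent, g < c.suppᶜ.ncard}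
  have h𝒢 : IsBridgeAddable 𝒢 := fun G hG e he => by
    induction e with | h u v =>
    simpa [𝒢] using hC (Fin n) G u v (by simpa [𝒢] using hG) he
  have hcard : ℬ.card * (g + 1) ≤ 2 * 𝒢.card :=
    card_mul_le_of_forall_le_ncard_compl_supp h𝒢 (fun G => by simp +contextual [𝒢, ℬ])
      fun G hG => (Finset.mem_filter.mp hG).2.2
  rw [classProb, classCount, Nat.card_eq_fintype_card, Nat.card_eq_fintype_card,
    Fintype.card_subtype, Fintype.card_subtype]
  refine div_le_of_le_mul₀ (by positivity) (by positivity) ?_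
  rw [div_mul_eq_mul_div, le_div_iff₀ (by positivity)]
  exact_mod_cast hcard

theorem giant_component_general {ε : ℝ} (hε : 0 < ε) :
    ∃ g : ℕ, ∀ C : GraphClassOn, ClassBridgeAddable C → ∀ n : ℕ, 0 < n →
      (∃ G, C (Fin n) G) →
        1 - ε ≤ classProb C n
          (fun G => ∃ c : G.ConnectedComponent, n - g ≤ Nat.card c.supp) := by
  obtain ⟨g, hg⟩ := exists_nat_gt (2 / ε)
  refine ⟨g, fun C hC n hn hne => ?_⟩
  have hbad := classProb_forall_lt_ncard_compl_supp_le hC hn g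
  have hsmall : 2 / ((g : ℝ) + 1) ≤ ε := by
    rw [div_lt_iff₀ hε] at hg
    rw [div_le_iff₀ (by positivity)]
    linarith
  have hcompl (G : SimpleGraph (Fin n)) :
      (¬∃ c : G.ConnectedComponent, n - g ≤ Nat.card c.supp) ↔
        ∀ c : G.ConnectedComponent, g < c.suppᶜ.ncard := by
    simp only [not_exists, not_le, lt_ncard_compl_iff, Nat.card_fin]
  have htotal := classProb_add_classProb_not hne
    fun G => ∃ c : G.ConnectedComponent, n - g ≤ Nat.card c.supp
  simp only [hcompl] at htotal
  linarith

end

/-- Random graphs from a smooth addable class have a giant component: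
for every `ε > 0` there is a constant `g` such that for all sufficiently large `n`, with
probability at least `1 - ε` the random graph has a connected component with at least
`n - g` vertices. -/
theorem giant_component
    (C : GraphClassOn) (hIso : ClassIsoInvariant C) (hAdd : ClassAddable C)
    (hSmooth : ClassSmooth C)
    (hne : ∀ n : ℕ, 1 ≤ n → ∃ G : SimpleGraph (Fin n), C (Fin n) G) :
    ∀ ε : ℝ, 0 < ε → ∃ g : ℕ, ∃ N : ℕ, ∀ n : ℕ, N ≤ n →
      1 - ε ≤ classProb C n
        (fun G => ∃ c : G.ConnectedComponent, n - g ≤ Nat.card c.supp) := by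
  intro ε hε
  obtain ⟨g, hg⟩ := giant_component_general hε
  exact ⟨g, 1, fun n hn => hg C hAdd.2 n hn (hne n hn)⟩
end

section
/- Let C be a smooth addable class of finite simple graphs with C_n nonempty for every n ≥ 1, let H be a finite connected simple graph, and let k ∈ ℕ. Then there is a real number p_k(H) such that the probability that the uniformly random graph R_n(C) on vertex set Fin n has exactly k connected components isomorphic to H tends to p_k(H) as n → ∞. -/
open Filter Topology FirstOrder

/-!
Let `h` be the number of vertices of `H`, let `a` be the number of graphs of the class on the
vertices of `H` that are isomorphic to `H`, and let `P n k` be the probability of having exactly `k`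
components isomorphic to `H`. Counting pairs of a graph and one of its components isomorphic to `H`,
by deleting that component, gives `(k + 1) * P n (k + 1) = lam n * P (n - h) k`, where `lam n` is
the mean number of such components.

If `c_n / (n * c_{n-1})` tends to `γ ≠ 0`, then `lam n` tends to `l = a / (h! * γ ^ h)`. The
binomial moments of `P n` satisfy the same recurrence in `k`, starting from the total mass `1`,
hence the `j`-th one tends to `l ^ j / j!`. By inclusion–exclusion `P n 0` tends to `exp (-l)`, and
the recurrence for `P` yields the Poisson limit `exp (-l) * l ^ k / k!`. If `γ = 0` and `a ≠ 0`,
then `lam n` tends to infinity and boundedness of `P` forces `P n k` to tend to `0`.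
-/

/-- The `j`-th binomial moment `∑ k, (k choose j) p k` of a (signed) mass function `p` on `ℕ`.
It is used only for finitely supported `p`; the sum is junk when it does not converge. -/
noncomputable def binomialMoment (p : ℕ → ℝ) (j : ℕ) : ℝ :=
  ∑' k, (k.choose j : ℝ) * p k

theorem binomialMoment_zero (p : ℕ → ℝ) : binomialMoment p 0 = ∑' k, p k := by
  simp [binomialMoment]

theorem hasSum_neg_one_pow_mul_choose (k : ℕ) :
    HasSum (fun j ↦ (-1 : ℝ) ^ j * k.choose j) (if k = 0 then 1 else 0) := by
  have hzero : ∀ j ∉ Finset.range (k + 1), (-1 : ℝ) ^ j * k.choose j = 0 := fun j hj ↦ by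
    rw [Nat.choose_eq_zero_of_lt (by simpa using hj), Nat.cast_zero, mul_zero]
  have hsum : ∑ j ∈ Finset.range (k + 1), (-1 : ℝ) ^ j * k.choose j = if k = 0 then 1 else 0 := by
    exact_mod_cast Int.alternating_sum_range_choose
  exact hsum ▸ hasSum_sum_of_ne_finset_zero hzero

theorem apply_zero_eq_tsum_binomialMoment {p : ℕ → ℝ} (hp : p.support.Finite) :
    p 0 = ∑' j, (-1) ^ j * binomialMoment p j := by
  have hsupp : ∀ k ∉ hp.toFinset, p k = 0 := by simp
  have hmoment (j : ℕ) : binomialMoment p j = ∑ k ∈ hp.toFinset, (k.choose j : ℝ) * p k :=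
    tsum_eq_sum fun k hk ↦ by rw [hsupp k hk, mul_zero]
  have hinner (k : ℕ) :
      HasSum (fun j ↦ (-1) ^ j * ((k.choose j : ℝ) * p k)) (if k = 0 then p k else 0) := by
    simpa only [mul_assoc, ite_mul, one_mul, zero_mul] using
      (hasSum_neg_one_pow_mul_choose k).mul_right (p k)
  have houter := hasSum_sum fun k (_ : k ∈ hp.toFinset) ↦ hinner k
  simp only [← Finset.mul_sum, ← hmoment, Finset.sum_ite_eq'] at houter
  rw [houter.tsum_eq]
  split_ifs with h0
  · rfl
  · exact hsupp 0 h0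

theorem succ_mul_binomialMoment_succ {p q : ℕ → ℝ} {c : ℝ} (hp : p.support.Finite)
    (h : ∀ k : ℕ, (k + 1) * p (k + 1) = c * q k) (j : ℕ) :
    (j + 1) * binomialMoment p (j + 1) = c * binomialMoment q j := by
  have hsum : Summable fun k ↦ (k.choose (j + 1) : ℝ) * p k :=
    summable_of_hasFiniteSupport (hp.subset (Function.support_mul_subset_right _ _))
  rw [binomialMoment, hsum.tsum_eq_zero_add, Nat.choose_zero_succ, Nat.cast_zero, zero_mul,
    zero_add, binomialMoment, ← tsum_mul_left, ← tsum_mul_left]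
  refine tsum_congr fun k ↦ ?_
  have habsorb : ((k : ℝ) + 1) * k.choose j = (k + 1).choose (j + 1) * (j + 1) := by
    exact_mod_cast Nat.add_one_mul_choose_eq k j
  linear_combination (-p (k + 1)) * habsorb + (k.choose j : ℝ) * h k

theorem tendsto_apply_zero_of_tendsto_binomialMoment {ι : Type*} {l : Filter ι} {P : ι → ℕ → ℝ}
    {β b : ℕ → ℝ} (hP : ∀ i, (P i).support.Finite)
    (hlim : ∀ j, Tendsto (fun i ↦ binomialMoment (P i) j) l (𝓝 (β j)))
    (hbound : ∀ i j, |binomialMoment (P i) j| ≤ b j) (hb : Summable b) :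
    Tendsto (fun i ↦ P i 0) l (𝓝 (∑' j, (-1) ^ j * β j)) := by
  simp only [fun i ↦ apply_zero_eq_tsum_binomialMoment (hP i)]
  exact tendsto_tsum_of_dominated_convergence hb (fun j ↦ (hlim j).const_mul _)
    (Eventually.of_forall fun i j ↦ by simpa using hbound i j)

section Recurrence

variable {P : ℕ → ℕ → ℝ} {τ : ℕ → ℕ} {lam : ℕ → ℝ}

theorem abs_le_pow_div_factorial_of_succ_mul_eq {E : ℕ → ℕ → ℝ} {B M : ℝ}
    (hB : ∀ n, |E n 0| ≤ B) (hM : ∀ n, |lam n| ≤ M)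
    (hrec : ∀ n j : ℕ, (j + 1) * E n (j + 1) = lam n * E (τ n) j) (j n : ℕ) :
    |E n j| ≤ B * (M ^ j / j.factorial) := by
  induction j generalizing n with
  | zero => simpa using hB n
  | succ j ih =>
    have hM0 : 0 ≤ M := (abs_nonneg _).trans (hM n)
    calc |E n (j + 1)| = |lam n| * |E (τ n) j| / (j + 1) := by
          rw [eq_div_iff (by positivity), ← abs_mul, ← hrec, abs_mul,
            abs_of_pos (by positivity : (0 : ℝ) < j + 1), mul_comm]
      _ ≤ M * (B * (M ^ j / j.factorial)) / (j + 1) := by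
          gcongr
          exacts [hM n, ih (τ n)]
      _ = B * (M ^ (j + 1) / (j + 1).factorial) := by
          rw [Nat.factorial_succ]
          push_cast
          field_simp
          ring

theorem tendsto_mul_pow_div_factorial_of_succ_mul_eq {E : ℕ → ℕ → ℝ} {e l : ℝ}
    (hτ : Tendsto τ atTop atTop) (hlam : Tendsto lam atTop (𝓝 l))
    (hE : Tendsto (fun n ↦ E n 0) atTop (𝓝 e))
    (hrec : ∀ n j : ℕ, (j + 1) * E n (j + 1) = lam n * E (τ n) j) (j : ℕ) :
    Tendsto (fun n ↦ E n j) atTop (𝓝 (e * (l ^ j / j.factorial))) := by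
  induction j with
  | zero => simpa using hE
  | succ j ih =>
    have hlim := (hlam.mul (ih.comp hτ)).div_const ((j : ℝ) + 1)
    convert hlim using 2 with n
    · rw [eq_div_iff (by positivity), mul_comm, hrec, Function.comp_apply]
    · rw [Nat.factorial_succ]
      push_cast
      field_simp
      ring

/- The binomial moments satisfy the same recurrence as the masses, but start from the total mass,
whose limit is known, instead of from `P n 0`. -/
theorem tendsto_poisson_of_succ_mul_eq {l : ℝ} (hτ : Tendsto τ atTop atTop)
    (hlam : Tendsto lam atTop (𝓝 l)) (hP : ∀ n, (P n).support.Finite)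
    (hmass : Tendsto (fun n ↦ ∑' k, P n k) atTop (𝓝 1))
    (hrec : ∀ n k : ℕ, (k + 1) * P n (k + 1) = lam n * P (τ n) k) (k : ℕ) :
    Tendsto (fun n ↦ P n k) atTop (𝓝 (Real.exp (-l) * (l ^ k / k.factorial))) := by
  have hmoment_rec (n j : ℕ) := succ_mul_binomialMoment_succ (hP n) (hrec n) j
  simp only [← binomialMoment_zero] at hmass
  obtain ⟨B, hB⟩ := (Metric.isBounded_range_of_tendsto _ hmass).exists_norm_le
  obtain ⟨M, hM⟩ := (Metric.isBounded_range_of_tendsto _ hlam).exists_norm_le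
  have hzero : Tendsto (fun n ↦ P n 0) atTop (𝓝 (Real.exp (-l))) := by
    have hlim := tendsto_apply_zero_of_tendsto_binomialMoment hP
      (tendsto_mul_pow_div_factorial_of_succ_mul_eq hτ hlam hmass hmoment_rec)
      (fun n j ↦ abs_le_pow_div_factorial_of_succ_mul_eq (fun n ↦ hB _ ⟨n, rfl⟩)
        (fun n ↦ hM _ ⟨n, rfl⟩) hmoment_rec j n)
      ((Real.summable_pow_div_factorial M).mul_left B)
    convert hlim using 2
    rw [Real.exp_eq_exp_ℝ, NormedSpace.exp_eq_tsum_div]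
    exact tsum_congr fun j ↦ by rw [neg_pow, one_mul, mul_div_assoc]
  exact tendsto_mul_pow_div_factorial_of_succ_mul_eq hτ hlam hzero hrec k

theorem tendsto_zero_of_succ_mul_eq {h : ℕ} {B : ℝ} (hlam : Tendsto lam atTop atTop)
    (hB : ∀ n k, |P n k| ≤ B)
    (hrec : ∀ n k : ℕ, (k + 1) * P n (k + 1) = lam n * P (n - h) k) (k : ℕ) :
    Tendsto (fun n ↦ P n k) atTop (𝓝 0) := by
  have hlam' : Tendsto (fun n ↦ lam (n + h)) atTop atTop :=
    hlam.comp (tendsto_add_atTop_nat h)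
  refine squeeze_zero_norm' ?_ (hlam'.const_div_atTop (((k : ℝ) + 1) * B))
  filter_upwards [hlam'.eventually_gt_atTop 0] with n hn
  have hrec' := hrec (n + h) k
  rw [Nat.add_sub_cancel] at hrec'
  rw [Real.norm_eq_abs, le_div_iff₀ hn]
  calc |P n k| * lam (n + h) = |lam (n + h) * P n k| := by rw [abs_mul, abs_of_pos hn, mul_comm]
    _ = (k + 1) * |P (n + h) (k + 1)| := by
        rw [← hrec', abs_mul, abs_of_pos (by positivity : (0 : ℝ) < k + 1)]
    _ ≤ (k + 1) * B := by gcongr; exact hB _ _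

end Recurrence

theorem tendsto_div_descFactorial_mul {c : ℕ → ℝ} {γ : ℝ} (hc : ∀ᶠ n in atTop, c n ≠ 0)
    (hγ : Tendsto (fun n : ℕ ↦ c n / (n * c (n - 1))) atTop (𝓝 γ)) (h : ℕ) :
    Tendsto (fun n : ℕ ↦ c n / (n.descFactorial h * c (n - h))) atTop (𝓝 (γ ^ h)) := by
  induction h with
  | zero =>
    refine tendsto_const_nhds.congr' ?_
    filter_upwards [hc] with n hn
    simp [hn]
  | succ h ih =>
    rw [pow_succ]
    refine (ih.mul (hγ.comp (tendsto_sub_atTop_nat h))).congr' ?_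
    filter_upwards [(tendsto_sub_atTop_nat h).eventually hc] with n hn
    rw [Function.comp_apply, Nat.descFactorial_succ, Nat.cast_mul, Nat.sub_sub, div_mul_div_comm,
      mul_comm (c n), mul_comm (n.descFactorial h : ℝ), mul_assoc, mul_div_mul_comm]
    field_simp
/-- `W` is a union of vertex sets of connected components of `G`: no edge of `G` leaves `W`. -/
def IsComponentUnion {V : Type*} (G : SimpleGraph V) (W : Set V) : Prop :=
  ∀ ⦃a b⦄, G.Adj a b → a ∈ W → b ∈ W

section ClosedEmbedding

variable {V V' : Type*} {G : SimpleGraph V} {G' : SimpleGraph V'} {f : G ↪g G'}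

theorem IsComponentUnion.mem_of_reachable {W : Set V} (hW : IsComponentUnion G W) {v w : V}
    (h : G.Reachable v w) (hv : v ∈ W) : w ∈ W := by
  obtain ⟨p⟩ := h
  induction p with
  | nil => exact hv
  | cons hadj _ ih => exact ih (hW hadj hv)

theorem exists_eq_and_reachable_of_isComponentUnion_range (hf : IsComponentUnion G' (Set.range f))
    {v : V} {w : V'} (h : G'.Reachable (f v) w) : ∃ u, f u = w ∧ G.Reachable v u := by
  refine IsComponentUnion.mem_of_reachable (W := {w | ∃ u, f u = w ∧ G.Reachable v u}) ?_ h
    ⟨v, rfl, .refl v⟩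
  rintro _ b hab ⟨u, rfl, hvu⟩
  obtain ⟨u', rfl⟩ := hf hab ⟨u, rfl⟩
  exact ⟨u', rfl, hvu.trans (f.map_adj_iff.1 hab).reachable⟩

theorem map_connectedComponent_injective (hf : IsComponentUnion G' (Set.range f)) :
    Function.Injective (SimpleGraph.ConnectedComponent.map f.toHom) := by
  refine SimpleGraph.ConnectedComponent.ind₂ fun v w h ↦ ?_
  obtain ⟨u, hu, hvu⟩ := exists_eq_and_reachable_of_isComponentUnion_range hf
    (SimpleGraph.ConnectedComponent.exact h)
  rw [← f.injective hu]
  exact SimpleGraph.ConnectedComponent.sound hvu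

theorem supp_map_connectedComponent (hf : IsComponentUnion G' (Set.range f))
    (c : G.ConnectedComponent) : (c.map f.toHom).supp = f '' c.supp := by
  induction c using SimpleGraph.ConnectedComponent.ind with | h v =>
  ext w
  simp only [SimpleGraph.ConnectedComponent.map_mk, SimpleGraph.ConnectedComponent.mem_supp_iff,
    SimpleGraph.ConnectedComponent.eq, Set.mem_image]
  constructor
  · intro h
    obtain ⟨u, rfl, hvu⟩ := exists_eq_and_reachable_of_isComponentUnion_range hf h.symm
    exact ⟨u, hvu.symm, rfl⟩
  · rintro ⟨u, huv, rfl⟩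
    exact huv.map f.toHom

theorem nonempty_induce_supp_iso_induce_supp_map (hf : IsComponentUnion G' (Set.range f))
    (c : G.ConnectedComponent) :
    Nonempty (G.induce c.supp ≃g G'.induce (c.map f.toHom).supp) := by
  rw [supp_map_connectedComponent hf]
  exact ⟨Equiv.Set.image f c.supp f.injective, by simp⟩

end ClosedEmbedding

theorem nonempty_iso_congr_left {V V' V'' : Type*} {G : SimpleGraph V} {G' : SimpleGraph V'}
    {G'' : SimpleGraph V''} (h : Nonempty (G ≃g G')) :
    Nonempty (G ≃g G'') ↔ Nonempty (G' ≃g G'') :=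
  ⟨fun ⟨f⟩ ↦ h.map fun e ↦ e.symm.trans f, fun ⟨f⟩ ↦ h.map fun e ↦ e.trans f⟩

section DisjointSum

variable {V W : Type*} (G : SimpleGraph V) (H : SimpleGraph W)

theorem isComponentUnion_range_sumInl :
    IsComponentUnion (G ⊕g H) (Set.range (SimpleGraph.Embedding.sumInl : G ↪g G ⊕g H)) := by
  rintro _ (b | b) hab ⟨a, rfl⟩
  · exact ⟨b, rfl⟩
  · exact absurd hab (SimpleGraph.not_adj_sum_inl_inr a b)

theorem isComponentUnion_range_sumInr :
    IsComponentUnion (G ⊕g H) (Set.range (SimpleGraph.Embedding.sumInr : H ↪g G ⊕g H)) := by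
  rintro _ (b | b) hab ⟨a, rfl⟩
  · exact absurd hab.symm (SimpleGraph.not_adj_sum_inl_inr b a)
  · exact ⟨b, rfl⟩

/-- The connected components of a disjoint sum of graphs are those of the two summands. -/
noncomputable def connectedComponentSumEquiv :
    G.ConnectedComponent ⊕ H.ConnectedComponent ≃ (G ⊕g H).ConnectedComponent :=
  Equiv.ofBijective
    (Sum.elim (SimpleGraph.ConnectedComponent.map SimpleGraph.Embedding.sumInl.toHom)
      (SimpleGraph.ConnectedComponent.map SimpleGraph.Embedding.sumInr.toHom)) <| by
    constructor
    · refine (map_connectedComponent_injective (isComponentUnion_range_sumInl G H)).sumElim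
        (map_connectedComponent_injective (isComponentUnion_range_sumInr G H)) fun c d ↦ ?_
      induction c using SimpleGraph.ConnectedComponent.ind with | h v =>
      induction d using SimpleGraph.ConnectedComponent.ind with | h w =>
      exact fun h ↦ SimpleGraph.not_reachable_sum_inl_inr v w
        (SimpleGraph.ConnectedComponent.exact h)
    · refine SimpleGraph.ConnectedComponent.ind ?_
      rintro (v | w)
      · exact ⟨.inl (G.connectedComponentMk v), rfl⟩
      · exact ⟨.inr (H.connectedComponentMk w), rfl⟩

end DisjointSum

section Components

variable {V W VH : Type} {G : SimpleGraph V} {G' : SimpleGraph W} (H : SimpleGraph VH)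

theorem numComponentsIso_congr (e : G ≃g G') : numComponentsIso G H = numComponentsIso G' H := by
  have hrange : IsComponentUnion G' (Set.range e.toEmbedding) :=
    fun _ b _ _ ↦ e.surjective b
  exact Nat.card_congr (e.connectedComponentEquiv.subtypeEquiv fun c ↦
    nonempty_iso_congr_left (nonempty_induce_supp_iso_induce_supp_map hrange c))

variable (G G') in
theorem numComponentsIso_sum [Finite V] [Finite W] :
    numComponentsIso (G ⊕g G') H = numComponentsIso G H + numComponentsIso G' H := by
  have hG : Finite G.ConnectedComponent := Quot.finite _
  have hG' : Finite G'.ConnectedComponent := Quot.finite _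
  rw [numComponentsIso, numComponentsIso, numComponentsIso, ← Nat.card_sum]
  have hinl (c : G.ConnectedComponent) := nonempty_iso_congr_left (G'' := H)
    (nonempty_induce_supp_iso_induce_supp_map (isComponentUnion_range_sumInl G G') c)
  have hinr (c : G'.ConnectedComponent) := nonempty_iso_congr_left (G'' := H)
    (nonempty_induce_supp_iso_induce_supp_map (isComponentUnion_range_sumInr G G') c)
  let e := (connectedComponentSumEquiv G G').symm.subtypeEquivOfSubtype'
    (p := fun c ↦ Nonempty ((G ⊕g G').induce c.supp ≃g H))
  exact Nat.card_congr <| e.trans <| Equiv.subtypeSum.trans <|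
    .sumCongr (.subtypeEquivRight fun c ↦ (hinl c).symm) (.subtypeEquivRight fun c ↦ (hinr c).symm)

variable {H} in
theorem numComponentsIso_eq_one (hH : H.Connected) (e : G ≃g H) : numComponentsIso G H = 1 := by
  have hG : G.Connected := e.connected_iff.2 hH
  have hsub := hG.preconnected.subsingleton_connectedComponent
  obtain ⟨v⟩ := hG.nonempty
  have hsupp : (G.connectedComponentMk v).supp = Set.univ :=
    Set.eq_univ_of_forall fun w ↦ Subsingleton.elim (G.connectedComponentMk w) _
  refine Nat.card_eq_one_iff_unique.2 ⟨inferInstance, ⟨G.connectedComponentMk v, ?_⟩⟩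
  rw [hsupp]
  exact ⟨(SimpleGraph.induceUnivIso G).trans e⟩

theorem ClassDecomposable.sum_iff {C : GraphClassOn} (hDec : ClassDecomposable C)
    (hIso : ClassIsoInvariant C) [Finite V] [Finite W] :
    C (V ⊕ W) (G ⊕g G') ↔ C V G ∧ C W G' := by
  rw [hDec _ (G ⊕g G'), hDec _ G, hDec _ G',
    ← (connectedComponentSumEquiv G G').forall_congr_right, Sum.forall]
  exact and_congr
    (forall_congr' fun c ↦ (hIso _ _ _ _ (nonempty_induce_supp_iso_induce_supp_map
      (isComponentUnion_range_sumInl G G') c)).symm)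
    (forall_congr' fun c ↦ (hIso _ _ _ _ (nonempty_induce_supp_iso_induce_supp_map
      (isComponentUnion_range_sumInr G G') c)).symm)

end Components

section Split

variable {V : Type*} {W : Set V}

/-- A graph is the disjoint sum of the graphs it induces on a union of components and on the
complement. -/
noncomputable def IsComponentUnion.sumInduceIso {G : SimpleGraph V} [DecidablePred (· ∈ W)]
    (hW : IsComponentUnion G W) : G.induce W ⊕g G.induce Wᶜ ≃g G where
  toEquiv := Equiv.Set.sumCompl W
  map_rel_iff' := by
    rintro (a | a) (b | b)
    · simp
    · simpa using fun h ↦ b.2 (hW h a.2)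
    · simpa using fun h ↦ a.2 (hW h.symm b.2)
    · simp

/-- Graphs for which `W` is a union of components correspond to pairs of graphs, one on `W` and one
on its complement. -/
noncomputable def componentUnionEquiv (W : Set V) [DecidablePred (· ∈ W)] :
    {G : SimpleGraph V // IsComponentUnion G W} ≃ SimpleGraph W × SimpleGraph (Wᶜ : Set V) where
  toFun G := (G.1.induce W, G.1.induce Wᶜ)
  invFun K := ⟨(K.1 ⊕g K.2).comap (Equiv.Set.sumCompl W).symm, fun a b hab ha ↦ by
    by_contra hb
    rw [SimpleGraph.comap_adj, Equiv.Set.sumCompl_symm_apply_of_mem ha,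
      Equiv.Set.sumCompl_symm_apply_of_notMem hb] at hab
    exact SimpleGraph.not_adj_sum_inl_inr _ _ hab⟩
  left_inv G := by
    ext a b
    rw [SimpleGraph.comap_adj, ← G.2.sumInduceIso.map_adj_iff]
    exact iff_of_eq (congrArg₂ G.1.Adj ((Equiv.Set.sumCompl W).apply_symm_apply a)
      ((Equiv.Set.sumCompl W).apply_symm_apply b))
  right_inv K := by
    ext a b <;> simp

end Split

section IsolatedCopies

/-- `W` is a union of components of `G` inducing a copy of `H`. For connected `H` this means that
`W` is the vertex set of a component isomorphic to `H`; unlike components, vertex sets do not depend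
on `G`, which allows counting over all `G` for a fixed `W`. -/
def IsIsolatedCopy {V VH : Type*} (H : SimpleGraph VH) (G : SimpleGraph V) (W : Set V) : Prop :=
  IsComponentUnion G W ∧ Nonempty (G.induce W ≃g H)

variable {V VH : Type} {H : SimpleGraph VH} {G : SimpleGraph V} {W : Set V}

theorem IsIsolatedCopy.card_eq {W : Finset V} (hW : IsIsolatedCopy H G W) :
    W.card = Nat.card VH := by
  obtain ⟨e⟩ := hW.2
  rw [← Nat.card_congr e.toEquiv, Nat.card_coe_set_eq, Set.ncard_coe_finset]

theorem isComponentUnion_supp (c : G.ConnectedComponent) : IsComponentUnion G c.supp :=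
  fun _ _ hab ha ↦ (c.mem_supp_congr_adj hab).1 ha

theorem IsIsolatedCopy.exists_supp_eq (hW : IsIsolatedCopy H G W) (hH : H.Connected) :
    ∃ c : G.ConnectedComponent, c.supp = W := by
  obtain ⟨hunion, ⟨e⟩⟩ := hW
  have hconn : (G.induce W).Connected := e.connected_iff.2 hH
  obtain ⟨v⟩ := hconn.nonempty
  refine ⟨G.connectedComponentMk v, Set.Subset.antisymm (fun w hw ↦ ?_) fun w hw ↦ ?_⟩
  · exact hunion.mem_of_reachable (SimpleGraph.ConnectedComponent.exact hw).symm v.2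
  · exact SimpleGraph.ConnectedComponent.sound
      ((hconn.preconnected ⟨w, hw⟩ v).map (SimpleGraph.Embedding.induce W).toHom)

theorem numComponentsIso_eq_card_isIsolatedCopy (hH : H.Connected) :
    numComponentsIso G H = Nat.card {W : Set V // IsIsolatedCopy H G W} := by
  refine Nat.card_congr (Equiv.ofBijective
    (fun c ↦ ⟨c.1.supp, isComponentUnion_supp c.1, c.2⟩) ⟨fun c d hcd ↦ ?_, fun ⟨W, hW⟩ ↦ ?_⟩)
  · exact Subtype.ext (SimpleGraph.ConnectedComponent.supp_injective (congrArg Subtype.val hcd))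
  · obtain ⟨c, rfl⟩ := hW.exists_supp_eq hH
    exact ⟨⟨c, hW.2⟩, rfl⟩

theorem IsComponentUnion.class_iff [Finite V] {C : GraphClassOn} (hW : IsComponentUnion G W)
    (hDec : ClassDecomposable C) (hIso : ClassIsoInvariant C) :
    C V G ↔ C W (G.induce W) ∧ C (Wᶜ : Set V) (G.induce Wᶜ) := by
  classical
  rw [← hDec.sum_iff hIso]
  exact hIso _ _ _ _ ⟨hW.sumInduceIso.symm⟩

theorem IsIsolatedCopy.numComponentsIso_eq_succ [Finite V] (hW : IsIsolatedCopy H G W)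
    (hH : H.Connected) : numComponentsIso G H = numComponentsIso (G.induce Wᶜ) H + 1 := by
  classical
  obtain ⟨hunion, ⟨e⟩⟩ := hW
  rw [← numComponentsIso_congr H hunion.sumInduceIso, numComponentsIso_sum,
    numComponentsIso_eq_one hH e, add_comm]

end IsolatedCopies

section Counting

/-- The number of graphs of the class on the vertex set `V` that are isomorphic to `H`. -/
noncomputable def copyCount (C : GraphClassOn) {VH : Type} (H : SimpleGraph VH) (V : Type)
    [Finite V] : ℕ :=
  Nat.card {G : SimpleGraph V // C V G ∧ Nonempty (G ≃g H)}

/-- The number of graphs of the class on the vertex set `V` with exactly `k` components isomorphic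
to `H`. -/
noncomputable def componentsIsoCount (C : GraphClassOn) {VH : Type} (H : SimpleGraph VH) (k : ℕ)
    (V : Type) [Finite V] : ℕ :=
  Nat.card {G : SimpleGraph V // C V G ∧ numComponentsIso G H = k}

variable {C : GraphClassOn} {V V' VH : Type} [Finite V] [Finite V'] {H : SimpleGraph VH}

theorem card_subtype_simpleGraph_congr {V V' : Type*} (e : V ≃ V') {P : SimpleGraph V → Prop}
    {Q : SimpleGraph V' → Prop} (h : ∀ G G', Nonempty (G ≃g G') → (P G ↔ Q G')) :
    Nat.card {G // P G} = Nat.card {G // Q G} :=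
  Nat.card_congr (e.simpleGraph.subtypeEquiv fun G ↦
    h _ _ ⟨(SimpleGraph.Iso.comap e.symm G).symm⟩)

theorem copyCount_congr (hIso : ClassIsoInvariant C) (e : V ≃ V') :
    copyCount C H V = copyCount C H V' :=
  card_subtype_simpleGraph_congr e fun _ _ h ↦
    and_congr (hIso _ _ _ _ h) (nonempty_iso_congr_left h)

theorem componentsIsoCount_congr (hIso : ClassIsoInvariant C) (k : ℕ) (e : V ≃ V') :
    componentsIsoCount C H k V = componentsIsoCount C H k V' :=
  card_subtype_simpleGraph_congr e fun _ _ ⟨f⟩ ↦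
    and_congr (hIso _ _ _ _ ⟨f⟩) (by rw [numComponentsIso_congr H f])

theorem card_isIsolatedCopy (hDec : ClassDecomposable C) (hIso : ClassIsoInvariant C)
    (hH : H.Connected) (k : ℕ) (W : Set V) :
    Nat.card {G : SimpleGraph V // (C V G ∧ numComponentsIso G H = k + 1) ∧ IsIsolatedCopy H G W} =
      copyCount C H W * componentsIsoCount C H k (Wᶜ : Set V) := by
  classical
  have hsplit (G : SimpleGraph V) (hG : IsComponentUnion G W) :
      (C V G ∧ numComponentsIso G H = k + 1) ∧ Nonempty (G.induce W ≃g H) ↔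
        (C W (G.induce W) ∧ Nonempty (G.induce W ≃g H)) ∧
          C (Wᶜ : Set V) (G.induce Wᶜ) ∧ numComponentsIso (G.induce Wᶜ) H = k := by
    by_cases hcopy : Nonempty (G.induce W ≃g H)
    · rw [hG.class_iff hDec hIso, IsIsolatedCopy.numComponentsIso_eq_succ ⟨hG, hcopy⟩ hH,
        Nat.succ_inj]
      tauto
    · tauto
  rw [copyCount, componentsIsoCount, ← Nat.card_prod]
  refine Nat.card_congr (.trans ?_ (Equiv.subtypeProdEquivProd
    (p := fun K : SimpleGraph W ↦ C W K ∧ Nonempty (K ≃g H))))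
  refine .trans ?_ ((componentUnionEquiv W).subtypeEquiv fun G ↦ hsplit G.1 G.2)
  exact .trans (.subtypeEquivRight fun G ↦ and_left_comm) (Equiv.subtypeSubtypeEquivSubtypeInter _
    fun G ↦ (C V G ∧ numComponentsIso G H = k + 1) ∧ Nonempty (G.induce W ≃g H)).symm

theorem card_isIsolatedCopy_of_card_eq [Finite VH] (hDec : ClassDecomposable C)
    (hIso : ClassIsoInvariant C) (hH : H.Connected) (k : ℕ) {W : Finset V}
    (hW : W.card = Nat.card VH) :
    Nat.card {G : SimpleGraph V // (C V G ∧ numComponentsIso G H = k + 1) ∧ IsIsolatedCopy H G W} =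
      copyCount C H VH * componentsIsoCount C H k (Fin (Nat.card V - Nat.card VH)) := by
  have hcompl : Nat.card ((W : Set V)ᶜ : Set V) = Nat.card V - Nat.card VH := by
    rw [Nat.card_coe_set_eq, Set.ncard_compl, Set.ncard_coe_finset, hW]
  obtain ⟨e⟩ : Nonempty ((W : Set V) ≃ VH) :=
    Finite.card_eq.1 (by rw [Nat.card_coe_set_eq, Set.ncard_coe_finset, hW])
  rw [card_isIsolatedCopy hDec hIso hH, copyCount_congr hIso e,
    componentsIsoCount_congr hIso k (Finite.equivFinOfCardEq hcompl)]

/- Double counting of the pairs consisting of a graph of the class with `k + 1` components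
isomorphic to `H` and one of these components. -/
theorem succ_mul_componentsIsoCount [Finite VH] (hDec : ClassDecomposable C)
    (hIso : ClassIsoInvariant C) (hH : H.Connected) (k : ℕ) :
    (k + 1) * componentsIsoCount C H (k + 1) V =
      (Nat.card V).choose (Nat.card VH) *
        (copyCount C H VH * componentsIsoCount C H k (Fin (Nat.card V - Nat.card VH))) := by
  classical
  have := Fintype.ofFinite V
  let graphs : Finset (SimpleGraph V) := {G | C V G ∧ numComponentsIso G H = k + 1}
  let sets : Finset (Finset V) := Finset.powersetCard (Nat.card VH) Finset.univ
  let r (G : SimpleGraph V) (W : Finset V) : Prop := IsIsolatedCopy H G W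
  have habove : ∀ G ∈ graphs, (sets.bipartiteAbove r G).card = k + 1 := fun G hG ↦ by
    rw [← (Finset.mem_filter.1 hG).2.2, numComponentsIso_eq_card_isIsolatedCopy hH,
      ← Nat.card_congr (Fintype.finsetEquivSet.subtypeEquiv fun _ ↦ Iff.rfl)]
    refine (Nat.subtype_card _ fun W ↦ ?_).symm
    rw [Finset.mem_bipartiteAbove, Finset.mem_powersetCard_univ]
    exact and_iff_right_of_imp IsIsolatedCopy.card_eq
  have hbelow : ∀ W ∈ sets, (graphs.bipartiteBelow r W).card =
      copyCount C H VH * componentsIsoCount C H k (Fin (Nat.card V - Nat.card VH)) := fun W hW ↦ by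
    rw [← card_isIsolatedCopy_of_card_eq hDec hIso hH k (Finset.mem_powersetCard_univ.1 hW)]
    refine (Nat.subtype_card _ fun G ↦ ?_).symm
    rw [Finset.mem_bipartiteBelow, Finset.mem_filter_univ]
  have hgraphs : graphs.card = componentsIsoCount C H (k + 1) V :=
    (Nat.subtype_card _ fun _ ↦ Finset.mem_filter_univ _).symm
  have hsets : sets.card = (Nat.card V).choose (Nat.card VH) := by
    rw [Finset.card_powersetCard, Finset.card_univ, ← Nat.card_eq_fintype_card]
  rw [mul_comm, ← hgraphs, ← hsets]
  exact Finset.card_mul_eq_card_mul r habove hbelow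

end Counting

section Probability

variable {C : GraphClassOn} {n : ℕ}

theorem classCount_ne_zero (h : ∃ G : SimpleGraph (Fin n), C (Fin n) G) : classCount C n ≠ 0 :=
  have := nonempty_subtype.2 h
  Nat.card_pos.ne'

theorem abs_classProb_le_one (P : SimpleGraph (Fin n) → Prop) : |classProb C n P| ≤ 1 := by
  rw [classProb, abs_of_nonneg (by positivity)]
  exact div_le_one_of_le₀ (mod_cast Nat.card_le_card_of_injective _
    (Subtype.impEmbedding _ (C (Fin n)) fun _ h ↦ h.1).injective) (Nat.cast_nonneg _)

theorem classProb_mul_classCount (P : SimpleGraph (Fin n) → Prop) :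
    classProb C n P * classCount C n = Nat.card {G : SimpleGraph (Fin n) // C (Fin n) G ∧ P G} := by
  refine div_mul_cancel_of_imp fun h ↦ ?_
  have hempty := (Finite.card_eq_zero_iff).1 (Nat.cast_eq_zero.1 h)
  have : IsEmpty {G : SimpleGraph (Fin n) // C (Fin n) G ∧ P G} :=
    ⟨fun G ↦ hempty.false ⟨G.1, G.2.1⟩⟩
  rw [Nat.card_of_isEmpty, Nat.cast_zero]

theorem classProb_eq_zero {P : SimpleGraph (Fin n) → Prop} (h : ∀ G, C (Fin n) G → ¬ P G) :
    classProb C n P = 0 := by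
  have : IsEmpty {G : SimpleGraph (Fin n) // C (Fin n) G ∧ P G} := ⟨fun G ↦ h G.1 G.2.1 G.2.2⟩
  rw [classProb, Nat.card_of_isEmpty, Nat.cast_zero, zero_div]

theorem finite_support_classProb {α : Type*} (f : SimpleGraph (Fin n) → α) :
    (Function.support fun k ↦ classProb C n (f · = k)).Finite :=
  (Set.finite_range f).subset fun k hk ↦ by
    by_contra hmem
    exact hk (classProb_eq_zero fun G _ hG ↦ hmem ⟨G, hG⟩)

theorem tsum_classProb {α : Type*} (hn : classCount C n ≠ 0) (f : SimpleGraph (Fin n) → α) :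
    ∑' k, classProb C n (f · = k) = 1 := by
  classical
  let graphs : Finset (SimpleGraph (Fin n)) := {G | C (Fin n) G}
  have hcount : graphs.card = classCount C n :=
    (Nat.subtype_card _ fun _ ↦ Finset.mem_filter_univ _).symm
  have hfiber (k : α) : classProb C n (f · = k) =
      (graphs.filter (f · = k)).card / (classCount C n : ℝ) := by
    rw [classProb, Nat.subtype_card _ fun G ↦ ?_]
    rw [Finset.mem_filter, Finset.mem_filter_univ]
  have houtside : ∀ k ∉ graphs.image f, classProb C n (f · = k) = 0 := fun k hk ↦
    classProb_eq_zero fun G hG hGk ↦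
      hk (Finset.mem_image.2 ⟨G, (Finset.mem_filter_univ _).2 hG, hGk⟩)
  rw [tsum_eq_sum houtside, Finset.sum_congr rfl fun k _ ↦ hfiber k, ← Finset.sum_div,
    ← Nat.cast_sum, ← Finset.card_eq_sum_card_image, hcount, div_self (Nat.cast_ne_zero.2 hn)]

end Probability

section MeanComponents

variable {C : GraphClassOn} {VH : Type} [Finite VH] {H : SimpleGraph VH}

/-- For connected `H` and decomposable `C`, the mean number of components isomorphic to `H` in a
random graph from the class on `Fin n`: place a copy of `H` on a set of vertices and any graph of
the class on the remaining ones. -/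
noncomputable def meanComponentsIso (C : GraphClassOn) (H : SimpleGraph VH) (n : ℕ) : ℝ :=
  n.choose (Nat.card VH) * (copyCount C H VH * classCount C (n - Nat.card VH)) / classCount C n

theorem succ_mul_classProb_numComponentsIso (hDec : ClassDecomposable C)
    (hIso : ClassIsoInvariant C) (hH : H.Connected) (n k : ℕ) :
    (k + 1) * classProb C n (fun G ↦ numComponentsIso G H = k + 1) =
      meanComponentsIso C H n *
        classProb C (n - Nat.card VH) (fun G ↦ numComponentsIso G H = k) := by
  have hcount := succ_mul_componentsIsoCount (V := Fin n) hDec hIso hH k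
  rw [Nat.card_fin] at hcount
  have hcount' : ((k : ℝ) + 1) * componentsIsoCount C H (k + 1) (Fin n) =
      n.choose (Nat.card VH) *
        (copyCount C H VH * componentsIsoCount C H k (Fin (n - Nat.card VH))) := by
    exact_mod_cast hcount
  calc (k + 1) * classProb C n (fun G ↦ numComponentsIso G H = k + 1)
    _ = (k + 1) * componentsIsoCount C H (k + 1) (Fin n) / classCount C n :=
        (mul_div_assoc _ _ _).symm
    _ = meanComponentsIso C H n *
          classProb C (n - Nat.card VH) (fun G ↦ numComponentsIso G H = k) := by
        rw [hcount', componentsIsoCount, ← classProb_mul_classCount, meanComponentsIso]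
        ring

theorem meanComponentsIso_eq (n : ℕ) :
    meanComponentsIso C H n =
      copyCount C H VH / (Nat.card VH).factorial *
        (classCount C n /
          (n.descFactorial (Nat.card VH) * classCount C (n - Nat.card VH)) : ℝ)⁻¹ := by
  rw [meanComponentsIso, inv_div, Nat.descFactorial_eq_factorial_mul_choose, Nat.cast_mul]
  field_simp

theorem tendsto_meanComponentsIso {γ : ℝ} (hcount : ∀ᶠ n in atTop, classCount C n ≠ 0)
    (hγ : Tendsto (fun n : ℕ ↦ (classCount C n : ℝ) / (n * classCount C (n - 1))) atTop (𝓝 γ))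
    (hγ0 : γ ≠ 0) :
    Tendsto (meanComponentsIso C H) atTop
      (𝓝 (copyCount C H VH / (Nat.card VH).factorial * (γ ^ Nat.card VH)⁻¹)) := by
  simp only [funext meanComponentsIso_eq]
  exact ((tendsto_div_descFactorial_mul (hcount.mono fun n ↦ Nat.cast_ne_zero.2) hγ _).inv₀
    (pow_ne_zero _ hγ0)).const_mul _

theorem tendsto_meanComponentsIso_atTop [Nonempty VH]
    (hcount : ∀ᶠ n in atTop, classCount C n ≠ 0)
    (hγ : Tendsto (fun n : ℕ ↦ (classCount C n : ℝ) / (n * classCount C (n - 1))) atTop (𝓝 0))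
    (hcopy : copyCount C H VH ≠ 0) :
    Tendsto (meanComponentsIso C H) atTop atTop := by
  have hratio := tendsto_div_descFactorial_mul (hcount.mono fun n ↦ Nat.cast_ne_zero.2) hγ
    (Nat.card VH)
  rw [zero_pow Nat.card_pos.ne'] at hratio
  have hpos : ∀ᶠ n in atTop, (classCount C n /
      (n.descFactorial (Nat.card VH) * classCount C (n - Nat.card VH)) : ℝ) ∈ Set.Ioi 0 := by
    filter_upwards [hcount, (tendsto_sub_atTop_nat (Nat.card VH)).eventually hcount,
      eventually_ge_atTop (Nat.card VH)] with n hn hn' hle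
    have := Nat.pos_of_ne_zero hn
    have := Nat.pos_of_ne_zero hn'
    have := Nat.pos_of_ne_zero fun h ↦ hle.not_gt (Nat.descFactorial_eq_zero_iff_lt.1 h)
    exact Set.mem_Ioi.2 (by positivity)
  simp only [funext meanComponentsIso_eq]
  exact (tendsto_nhdsWithin_iff.2 ⟨hratio, hpos⟩).inv_tendsto_nhdsGT_zero.const_mul_atTop
    (by have := Nat.pos_of_ne_zero hcopy; positivity)

theorem tendsto_classProb_numComponentsIso_poisson {l : ℝ} (hDec : ClassDecomposable C)
    (hIso : ClassIsoInvariant C) (hH : H.Connected)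
    (hcount : ∀ᶠ n in atTop, classCount C n ≠ 0)
    (hl : Tendsto (meanComponentsIso C H) atTop (𝓝 l)) (k : ℕ) :
    Tendsto (fun n ↦ classProb C n (fun G ↦ numComponentsIso G H = k)) atTop
      (𝓝 (Real.exp (-l) * (l ^ k / k.factorial))) :=
  tendsto_poisson_of_succ_mul_eq
    (P := fun n k ↦ classProb C n (fun G ↦ numComponentsIso G H = k))
    (tendsto_sub_atTop_nat (Nat.card VH)) hl
    (fun _ ↦ finite_support_classProb _)
    (tendsto_const_nhds.congr' (hcount.mono fun _ hn ↦ (tsum_classProb hn _).symm))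
    (succ_mul_classProb_numComponentsIso hDec hIso hH) k

theorem tendsto_classProb_numComponentsIso_zero (hDec : ClassDecomposable C)
    (hIso : ClassIsoInvariant C) (hH : H.Connected)
    (hmean : Tendsto (meanComponentsIso C H) atTop atTop) (k : ℕ) :
    Tendsto (fun n ↦ classProb C n (fun G ↦ numComponentsIso G H = k)) atTop (𝓝 0) :=
  tendsto_zero_of_succ_mul_eq
    (P := fun n k ↦ classProb C n (fun G ↦ numComponentsIso G H = k)) hmean
    (fun _ _ ↦ abs_classProb_le_one _) (succ_mul_classProb_numComponentsIso hDec hIso hH) k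

end MeanComponents

theorem components_iso_count_converges_general
    (C : GraphClassOn) (hIso : ClassIsoInvariant C) (hDec : ClassDecomposable C)
    (hSmooth : ClassSmooth C)
    (hne : ∀ᶠ n : ℕ in atTop, ∃ G : SimpleGraph (Fin n), C (Fin n) G)
    (VH : Type) [Finite VH] (H : SimpleGraph VH) (hH : H.Connected) (k : ℕ) :
    ∃ p : ℝ,
      Tendsto (fun n : ℕ => classProb C n (fun G => numComponentsIso G H = k))
        atTop (𝓝 p) := by
  obtain ⟨γ, hγ⟩ := hSmooth
  have hcount : ∀ᶠ n in atTop, classCount C n ≠ 0 := hne.mono fun n ↦ classCount_ne_zero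
  have := hH.nonempty
  obtain rfl | hγ0 := eq_or_ne γ 0
  · by_cases hcopy : copyCount C H VH = 0
    · have hmean : Tendsto (meanComponentsIso C H) atTop (𝓝 0) := by
        simp [funext meanComponentsIso_eq, hcopy]
      exact ⟨_, tendsto_classProb_numComponentsIso_poisson hDec hIso hH hcount hmean k⟩
    · exact ⟨0, tendsto_classProb_numComponentsIso_zero hDec hIso hH
        (tendsto_meanComponentsIso_atTop hcount hγ hcopy) k⟩
  · exact ⟨_, tendsto_classProb_numComponentsIso_poisson hDec hIso hH hcount
      (tendsto_meanComponentsIso hcount hγ hγ0) k⟩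

/-- For a smooth addable class, a connected graph `H` and `k : ℕ`, the
probability that the random graph from the class has exactly `k` connected components
isomorphic to `H` converges. -/
theorem components_iso_count_converges
    (C : GraphClassOn) (hIso : ClassIsoInvariant C) (hAdd : ClassAddable C)
    (hSmooth : ClassSmooth C)
    (hne : ∀ n : ℕ, 1 ≤ n → ∃ G : SimpleGraph (Fin n), C (Fin n) G)
    (VH : Type) [Finite VH] (H : SimpleGraph VH) (hH : H.Connected) (k : ℕ) :
    ∃ p : ℝ,
      Tendsto (fun n : ℕ => classProb C n (fun G => numComponentsIso G H = k))
        atTop (𝓝 p) := by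
  exact components_iso_count_converges_general C hIso hAdd.1 hSmooth
    (eventually_atTop.2 ⟨1, hne⟩) VH H hH k
end

section
/- Let f_n be the number of acyclic simple graphs (forests) on the vertex set Fin n. Then limsup_{n→∞} (f_n/n!)^{1/n} = e; that is, the growth constant of the class of forests equals e. -/
open Filter Topology FirstOrder

/-!
Hanging every component of a forest from a root turns it into a parent map `V → V`, from which the
forest can be recovered, so there are at most `n ^ n` forests. Conversely, Pitman's double counting
bounds the number of trees from below: in a rooted forest with `k` edges there are `n * (n - k - 1)`
ways to choose a vertex `u` and a root `r` of another component, and joining them gives a rooted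
forest with `k + 1` edges, from which the choice can be recovered by naming one of these edges.
Multiplying these inequalities gives at least `n ^ (n - 1)` rooted trees. Both bounds differ from
`n ^ n` by a polynomial factor only, which disappears in the `n`-th root, and
`(n ^ n / n!) ^ (1 / n)` tends to `e` by Stirling's formula.
-/

section Forests

open SimpleGraph

section ParentMap

variable {V : Type*} {G : SimpleGraph V}

theorem adj_snd_of_snd_ne {u v : V} (w : G.Walk u v) (h : w.snd ≠ u) : G.Adj u w.snd :=
  w.adj_snd fun hnil ↦ h <| by cases hnil; rfl

theorem exists_fromRel_eq_of_isAcyclic (hG : G.IsAcyclic) :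
    ∃ p : V → V, SimpleGraph.fromRel (fun u v ↦ p u = v) = G := by
  have exists_path_to_root (v : V) : ∃ w : G.Walk v (G.connectedComponentMk v).out, w.IsPath :=
    (ConnectedComponent.exact (Quot.out_eq (G.connectedComponentMk v))).symm.exists_isPath
  choose w hw using exists_path_to_root
  refine ⟨fun v ↦ (w v).snd, ?_⟩
  ext a b
  rw [fromRel_adj]
  constructor
  · rintro ⟨hne, rfl | rfl⟩
    · exact adj_snd_of_snd_ne _ hne.symm
    · exact (adj_snd_of_snd_ne _ hne).symm
  · intro hab
    refine ⟨hab.ne, ?_⟩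
    by_cases hb : b ∈ (w a).support
    · exact .inl (hG.eq_snd_of_adj_start (hw a) hab hb).symm
    · have hroot : (G.connectedComponentMk a).out = (G.connectedComponentMk b).out :=
        congrArg Quot.out (ConnectedComponent.sound hab.reachable)
      have ha : a ∈ (w b).support := by
        simpa using hG.mem_support_of_ne_mem_support_of_adj_of_isPath (hw b).reverse
          (q := ((w a).copy rfl hroot).reverse) (by simpa using (hw a)) hab.symm (by simpa using hb)
      exact .inr (hG.eq_snd_of_adj_start (hw b) hab.symm ha).symm

theorem card_isAcyclic_le [Finite V] :
    Nat.card {G : SimpleGraph V // G.IsAcyclic} ≤ Nat.card V ^ Nat.card V := by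
  choose parent hparent using fun G : {G : SimpleGraph V // G.IsAcyclic} ↦
    exists_fromRel_eq_of_isAcyclic G.2
  have hinj : Function.Injective parent := fun G H h ↦
    Subtype.ext <| by rw [← hparent G, ← hparent H, h]
  simpa only [Nat.card_fun] using Nat.card_le_card_of_injective parent hinj

end ParentMap

section SupEdge

variable {V : Type*} {G : SimpleGraph V} {u v a b : V}

theorem reachable_sup_edge_iff : (G ⊔ edge u v).Reachable a b ↔
    G.Reachable a b ∨ G.Reachable a u ∧ G.Reachable v b ∨ G.Reachable a v ∧ G.Reachable u b := by
  constructor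
  · rintro ⟨w⟩
    induction w with
    | nil => exact .inl .rfl
    | cons hadj _ ih =>
      rcases hadj with hadj | hadj
      · have hreach := hadj.reachable
        grind [Reachable.trans]
      · grind [Reachable.rfl]
  · have hle : G ≤ G ⊔ edge u v := le_sup_left
    have huv : (G ⊔ edge u v).Reachable u v := by
      by_cases h : u = v
      · rw [h]
      · exact Adj.reachable (.inr (by simp [edge_adj, h]))
    rintro (h | ⟨hau, hvb⟩ | ⟨hav, hub⟩)
    · exact h.mono hle
    · exact (hau.mono hle).trans (huv.trans (hvb.mono hle))
    · exact (hav.mono hle).trans (huv.symm.trans (hub.mono hle))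

theorem sup_edge_sdiff_edge (h : ¬G.Adj u v) : (G ⊔ edge u v) \ edge u v = G := by
  ext a b
  simp only [sdiff_adj, sup_adj, edge_adj]
  grind [G.adj_comm]

theorem edgeSet_sup_edge (h : u ≠ v) : (G ⊔ edge u v).edgeSet = insert s(u, v) G.edgeSet := by
  have hdisj : Disjoint {s(u, v)} Sym2.diagSet := by simpa using h
  rw [edgeSet_sup, edgeSet_edge, hdisj.sdiff_eq_left, Set.union_singleton]

end SupEdge

/-- A forest on `V` with `k` edges, together with a set of roots, one in each component. Recording
the number of roots spares the proof that a forest with `k` edges has `card V - k` components. -/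
@[ext]
structure RootedForest (V : Type*) [Fintype V] (k : ℕ) where
  graph : SimpleGraph V
  roots : Finset V
  isAcyclic : graph.IsAcyclic
  existsUnique_root : ∀ v, ∃! r, r ∈ roots ∧ graph.Reachable v r
  ncard_edgeSet : graph.edgeSet.ncard = k
  card_roots_add : roots.card + k = Fintype.card V

namespace RootedForest

variable {V : Type*} [Fintype V] {k : ℕ}

instance : Finite (RootedForest V k) :=
  .of_injective (fun F ↦ (F.graph, F.roots)) fun _ _ h ↦
    RootedForest.ext (congrArg Prod.fst h) (congrArg Prod.snd h)

instance : Nonempty (RootedForest V 0) :=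
  ⟨{ graph := ⊥
     roots := Finset.univ
     isAcyclic := isAcyclic_bot
     existsUnique_root := by simp
     ncard_edgeSet := by simp
     card_roots_add := rfl }⟩

open Classical in
/-- The roots of `F` that may be joined to `u` without closing a cycle. -/
noncomputable def foreignRoots (F : RootedForest V k) (u : V) : Finset V :=
  {r ∈ F.roots | ¬F.graph.Reachable u r}

theorem mem_foreignRoots {F : RootedForest V k} {u r : V} :
    r ∈ F.foreignRoots u ↔ r ∈ F.roots ∧ ¬F.graph.Reachable u r := by
  classical rw [foreignRoots, Finset.mem_filter]

theorem card_foreignRoots (F : RootedForest V k) (u : V) :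
    (F.foreignRoots u).card = Fintype.card V - (k + 1) := by
  classical
  obtain ⟨t, ⟨ht, hut⟩, huniq⟩ := F.existsUnique_root u
  have herase : F.foreignRoots u = F.roots.erase t := by
    ext r
    rw [mem_foreignRoots, Finset.mem_erase]
    grind
  rw [herase, Finset.card_erase_of_mem ht, ← F.card_roots_add]
  lia

section Link

variable [DecidableEq V]

/-- Join `u` to the root `r` of another component; the joined component keeps the root of `u`. -/
def link (F : RootedForest V k) {u r : V} (hr : r ∈ F.foreignRoots u) : RootedForest V (k + 1) where
  graph := F.graph ⊔ edge u r
  roots := F.roots.erase r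
  isAcyclic := F.isAcyclic.sup_edge_of_not_reachable (mem_foreignRoots.mp hr).2
  existsUnique_root v := by
    obtain ⟨hroot, hur⟩ := mem_foreignRoots.mp hr
    obtain ⟨s, ⟨hs, hvs⟩, hs_unique⟩ := F.existsUnique_root v
    obtain ⟨t, ⟨ht, hut⟩, ht_unique⟩ := F.existsUnique_root u
    obtain ⟨_, -, hr_unique⟩ := F.existsUnique_root r
    simp only [Finset.mem_erase, reachable_sup_edge_iff]
    refine ⟨if s = r then t else s, ?_, ?_⟩
    · grind
    · grind [Reachable.rfl]
  ncard_edgeSet := by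
    obtain ⟨-, hur⟩ := mem_foreignRoots.mp hr
    have hne : u ≠ r := fun h ↦ hur (h ▸ .rfl)
    have hnotMem : s(u, r) ∉ F.graph.edgeSet := fun h ↦ hur (Adj.reachable h)
    rw [edgeSet_sup_edge hne, Set.ncard_insert_of_notMem hnotMem, F.ncard_edgeSet]
  card_roots_add := by
    have := Finset.card_erase_add_one (mem_foreignRoots.mp hr).1
    have := F.card_roots_add
    lia

theorem mk_mem_edgeSet_link (F : RootedForest V k) {u r : V} (hr : r ∈ F.foreignRoots u) :
    s(u, r) ∈ (F.link hr).graph.edgeSet := by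
  have hne : u ≠ r := fun h ↦ (mem_foreignRoots.mp hr).2 (h ▸ .rfl)
  exact .inr (by simp [edge_adj, hne])

variable {F F' : RootedForest V k} {u r u' r' : V} {hr : r ∈ F.foreignRoots u}
  {hr' : r' ∈ F'.foreignRoots u'}

theorem graph_eq_of_link_eq (h : F.link hr = F'.link hr') (he : s(u, r) = s(u', r')) :
    F.graph = F'.graph := by
  have hadj : ¬F.graph.Adj u r := fun h ↦ (mem_foreignRoots.mp hr).2 h.reachable
  have hadj' : ¬F'.graph.Adj u' r' := fun h ↦ (mem_foreignRoots.mp hr').2 h.reachable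
  have hgraph : F.graph ⊔ edge u r = F'.graph ⊔ edge u' r' := congrArg graph h
  have hedge : edge u r = edge u' r' := by simp only [edge, he]
  rw [← sup_edge_sdiff_edge hadj, hgraph, hedge, sup_edge_sdiff_edge hadj']

/-- The orientation of the new edge is forced: were `u` the deleted root in `F'`, it would share its
component there with the root of `u` in `F`, which is kept by both links. -/
theorem root_eq_of_link_eq (h : F.link hr = F'.link hr') (he : s(u, r) = s(u', r')) : r = r' := by
  obtain ⟨-, rfl⟩ | ⟨rfl, rfl⟩ := Sym2.eq_iff.mp he
  · rfl
  · obtain ⟨t, ⟨ht, hut⟩, -⟩ := F.existsUnique_root u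
    have hroots : F.roots.erase r = F'.roots.erase u := congrArg roots h
    have htr : t ≠ r := fun htr ↦ (mem_foreignRoots.mp hr).2 (htr ▸ hut)
    obtain ⟨htu, ht'⟩ := Finset.mem_erase.mp (hroots ▸ Finset.mem_erase.mpr ⟨htr, ht⟩)
    have hut' : F'.graph.Reachable u t := graph_eq_of_link_eq h he ▸ hut
    exact absurd ((F'.existsUnique_root u).unique ⟨ht', hut'⟩
      ⟨(mem_foreignRoots.mp hr').1, .rfl⟩) htu

theorem eq_of_link_eq (h : F.link hr = F'.link hr') (he : s(u, r) = s(u', r')) :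
    F = F' ∧ u = u' ∧ r = r' := by
  obtain rfl := root_eq_of_link_eq h he
  refine ⟨RootedForest.ext (graph_eq_of_link_eq h he) ?_, Sym2.congr_left.mp he, rfl⟩
  have hroots : F.roots.erase r = F'.roots.erase r := congrArg roots h
  rw [← Finset.insert_erase (mem_foreignRoots.mp hr).1, hroots,
    Finset.insert_erase (mem_foreignRoots.mp hr').1]

end Link

theorem card_mul_card_le_succ_mul_card (k : ℕ) :
    Fintype.card V * (Fintype.card V - (k + 1)) * Nat.card (RootedForest V k) ≤
      (k + 1) * Nat.card (RootedForest V (k + 1)) := by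
  classical
  have := Fintype.ofFinite (RootedForest V k)
  have := Fintype.ofFinite (RootedForest V (k + 1))
  let linkWithEdge (x : Σ F : RootedForest V k, Σ u, F.foreignRoots u) :
      Σ F : RootedForest V (k + 1), F.graph.edgeSet :=
    ⟨x.1.link x.2.2.2, s(x.2.1, x.2.2), x.1.mk_mem_edgeSet_link x.2.2.2⟩
  have hinj : Function.Injective linkWithEdge := by
    rintro ⟨F, u, r, hr⟩ ⟨F', u', r', hr'⟩ h
    have hlink : F.link hr = F'.link hr' := congrArg Sigma.fst h
    have hedge : s(u, r) = s(u', r') := congrArg (fun y ↦ (y.2 : Sym2 V)) h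
    obtain ⟨rfl, rfl, rfl⟩ := eq_of_link_eq hlink hedge
    rfl
  have hsource : Nat.card (Σ F : RootedForest V k, Σ u, F.foreignRoots u) =
      Fintype.card V * (Fintype.card V - (k + 1)) * Nat.card (RootedForest V k) := by
    simp [card_foreignRoots, mul_comm]
  have htarget : Nat.card (Σ F : RootedForest V (k + 1), F.graph.edgeSet) =
      (k + 1) * Nat.card (RootedForest V (k + 1)) := by
    simp only [Nat.card_sigma, Nat.card_coe_set_eq, ncard_edgeSet, Finset.sum_const,
      Finset.card_univ, smul_eq_mul, ← Nat.card_eq_fintype_card, mul_comm]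
  rw [← hsource, ← htarget]
  exact Nat.card_le_card_of_injective linkWithEdge hinj

theorem pow_mul_choose_le_card (k : ℕ) :
    Fintype.card V ^ k * (Fintype.card V - 1).choose k ≤ Nat.card (RootedForest V k) := by
  induction k with
  | zero =>
    rw [pow_zero, Nat.choose_zero_right, mul_one]
    exact Nat.card_pos
  | succ k ih =>
    set n := Fintype.card V
    refine Nat.le_of_mul_le_mul_left ?_ k.succ_pos
    calc (k + 1) * (n ^ (k + 1) * (n - 1).choose (k + 1))
        = n ^ (k + 1) * ((n - 1).choose (k + 1) * (k + 1)) := by ring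
      _ = n ^ (k + 1) * ((n - 1).choose k * (n - (k + 1))) := by
          rw [Nat.choose_succ_right_eq, Nat.sub_sub, Nat.add_comm 1 k]
      _ = n * (n - (k + 1)) * (n ^ k * (n - 1).choose k) := by ring
      _ ≤ n * (n - (k + 1)) * Nat.card (RootedForest V k) := by gcongr
      _ ≤ (k + 1) * Nat.card (RootedForest V (k + 1)) := card_mul_card_le_succ_mul_card k

theorem card_le_choose_mul_card_isAcyclic (k : ℕ) :
    Nat.card (RootedForest V k) ≤ (Fintype.card V).choose (Fintype.card V - k) *
      Nat.card {G : SimpleGraph V // G.IsAcyclic} := by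
  let rootsAndGraph (F : RootedForest V k) :
      {R : Finset V // R.card = Fintype.card V - k} × {G : SimpleGraph V // G.IsAcyclic} :=
    (⟨F.roots, Nat.eq_sub_of_add_eq F.card_roots_add⟩, ⟨F.graph, F.isAcyclic⟩)
  have hinj : Function.Injective rootsAndGraph := fun F F' h ↦
    RootedForest.ext (congrArg (fun y ↦ y.2.1) h) (congrArg (fun y ↦ y.1.1) h)
  have hcard := Nat.card_le_card_of_injective rootsAndGraph hinj
  rwa [Nat.card_prod, Nat.card_eq_fintype_card (α := {R : Finset V // _}),
    Fintype.card_finset_len] at hcard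

end RootedForest

theorem card_pow_card_le_sq_mul_card_isAcyclic (V : Type*) [Finite V] [Nonempty V] :
    Nat.card V ^ Nat.card V ≤ Nat.card V ^ 2 * Nat.card {G : SimpleGraph V // G.IsAcyclic} := by
  have := Fintype.ofFinite V
  rw [Nat.card_eq_fintype_card (α := V)]
  obtain ⟨m, hm⟩ := Nat.exists_eq_add_one.mpr (Fintype.card_pos (α := V))
  have hlower := RootedForest.pow_mul_choose_le_card (V := V) m
  have hupper := RootedForest.card_le_choose_mul_card_isAcyclic (V := V) m
  rw [hm, Nat.add_sub_cancel, Nat.choose_self, mul_one] at hlower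
  rw [hm, Nat.add_sub_cancel_left, Nat.choose_one_right] at hupper
  rw [hm, pow_succ', sq, mul_assoc]
  exact Nat.mul_le_mul_left _ (hlower.trans hupper)

end Forests

section Asymptotics

theorem tendsto_natCast_rpow_inv : Tendsto (fun n : ℕ ↦ (n : ℝ) ^ (n : ℝ)⁻¹) atTop (𝓝 1) := by
  simpa only [Function.comp_def, one_div] using tendsto_rpow_div.comp tendsto_natCast_atTop_atTop

theorem tendsto_stirlingSeq_rpow_inv :
    Tendsto (fun n : ℕ ↦ Stirling.stirlingSeq n ^ (n : ℝ)⁻¹) atTop (𝓝 1) := by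
  have hpi : √Real.pi ≠ 0 := by positivity
  simpa only [Real.rpow_zero] using
    Stirling.tendsto_stirlingSeq_sqrt_pi.rpow tendsto_inv_atTop_nhds_zero_nat (.inl hpi)

theorem tendsto_sqrt_two_mul_rpow_inv :
    Tendsto (fun n : ℕ ↦ √(2 * n) ^ (n : ℝ)⁻¹) atTop (𝓝 1) := by
  have hdouble : Tendsto (fun n : ℕ ↦ 2 * n) atTop atTop := tendsto_id.const_mul_atTop' two_pos
  refine (tendsto_natCast_rpow_inv.comp hdouble).congr fun n ↦ ?_
  rw [Function.comp_apply, Real.sqrt_eq_rpow, ← Real.rpow_mul (by positivity)]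
  push_cast
  rw [mul_inv, one_div]

theorem tendsto_self_pow_div_factorial_rpow_inv :
    Tendsto (fun n : ℕ ↦ ((n : ℝ) ^ n / n.factorial) ^ (n : ℝ)⁻¹) atTop (𝓝 (Real.exp 1)) := by
  have hlim := (tendsto_const_nhds (x := Real.exp 1)).div
    (tendsto_stirlingSeq_rpow_inv.mul tendsto_sqrt_two_mul_rpow_inv) (by norm_num)
  rw [mul_one, div_one] at hlim
  refine hlim.congr' ?_
  filter_upwards [eventually_ne_atTop 0] with n hn
  have hstirling : Stirling.stirlingSeq n * √(2 * n) = n.factorial / (n / Real.exp 1) ^ n := by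
    rw [Stirling.stirlingSeq]
    field_simp
  have hratio : (n : ℝ) ^ n / n.factorial =
      Real.exp 1 ^ n / (Stirling.stirlingSeq n * √(2 * n)) := by
    rw [hstirling, div_pow]
    field_simp
  have hnonneg : 0 ≤ Stirling.stirlingSeq n := by unfold Stirling.stirlingSeq; positivity
  rw [hratio, Real.div_rpow (by positivity) (by positivity),
    Real.pow_rpow_inv_natCast (Real.exp_pos 1).le hn, Real.mul_rpow hnonneg (by positivity)]
  rfl

theorem tendsto_div_factorial_rpow_inv_of_pow_self_le {a : ℕ → ℕ} (d : ℕ)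
    (hlower : ∀ᶠ n in atTop, n ^ n ≤ n ^ d * a n) (hupper : ∀ᶠ n in atTop, a n ≤ n ^ n) :
    Tendsto (fun n : ℕ ↦ ((a n : ℝ) / n.factorial) ^ (n : ℝ)⁻¹) atTop (𝓝 (Real.exp 1)) := by
  have hlim := tendsto_self_pow_div_factorial_rpow_inv.div (tendsto_natCast_rpow_inv.pow d)
    (by norm_num)
  rw [one_pow, div_one] at hlim
  refine tendsto_of_tendsto_of_tendsto_of_le_of_le' hlim
    tendsto_self_pow_div_factorial_rpow_inv ?_ ?_
  · filter_upwards [hlower, eventually_gt_atTop 0] with n hn hpos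
    have hle : (n : ℝ) ^ n / n.factorial / n ^ d ≤ a n / n.factorial := by
      rw [div_right_comm]
      gcongr
      rw [div_le_iff₀' (by positivity)]
      exact_mod_cast hn
    calc ((n : ℝ) ^ n / n.factorial) ^ (n : ℝ)⁻¹ / ((n : ℝ) ^ (n : ℝ)⁻¹) ^ d
        = ((n : ℝ) ^ n / n.factorial / n ^ d) ^ (n : ℝ)⁻¹ := by
          rw [Real.rpow_pow_comm (by positivity), ← Real.div_rpow (by positivity) (by positivity)]
      _ ≤ (a n / n.factorial) ^ (n : ℝ)⁻¹ := by gcongr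
  · filter_upwards [hupper] with n hn
    gcongr
    exact_mod_cast hn

end Asymptotics

theorem forests_growth_constant_general :
    Tendsto (fun n : ℕ ↦ ((Nat.card {G : SimpleGraph (Fin n) // G.IsAcyclic} : ℝ) /
      (n.factorial : ℝ)) ^ ((n : ℝ)⁻¹)) atTop (𝓝 (Real.exp 1)) := by
  refine tendsto_div_factorial_rpow_inv_of_pow_self_le 2 ?_ ?_
  · filter_upwards [eventually_ne_atTop 0] with n hn
    have : NeZero n := ⟨hn⟩
    simpa only [Nat.card_fin] using card_pow_card_le_sq_mul_card_isAcyclic (Fin n)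
  · exact .of_forall fun n ↦ by simpa only [Nat.card_fin] using card_isAcyclic_le (V := Fin n)

/-- The growth constant of the class of labelled forests equals `e`. -/
theorem forests_growth_constant :
    Filter.limsup
        (fun n : ℕ =>
          ((Nat.card {G : SimpleGraph (Fin n) // G.IsAcyclic} : ℝ) /
            (n.factorial : ℝ)) ^ ((n : ℝ)⁻¹))
        atTop = Real.exp 1 :=
  forests_growth_constant_general.limsup_eq
end
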